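/- Let g ≥ 2 be an integer. There exist constants c > 0 and C > 0 depending only on g such that for every integer N ≥ 1, the number of ordered pairs (m,n) with m, n ∈ Π(2N+1) and gcd(m,n) = 1 satisfies |#{(m,n) ∈ Π(2N+1)² : gcd(m,n)=1} − (ρ(g)/ζ(2))·(1 − (2/g)·∏_{p ∣ g} p/(p+1))·(#Π(2N+1))²| ≤ C·(#Π(2N+1))²·g^{−c√N}, where the product is over primes p dividing g. -/

import Mathlib

/-!
Write `N = K + 1`. A palindrome of length `2N + 1` is
`m = a (1 + g^(2K+2)) + u g^(K+1) + ∑ c_i w_i`, with outer digit `a ≠ 0`, central digit `u`, free digits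
`c_0, …, c_(K-1)` and weights `w_i = g^(K-i) + g^(K+2+i)` (`sum_palins`). Common factors of `m` with `g`
depend only on `a`, and for odd `g` the parity of `m` is that of `u`. So for two palindromes with
digits `(a, u)` and `(b, v)` either `m` and `n` always share a factor with `2g`, or never. In the
second case `gcd(m, n)` is coprime to `2g`, and Möbius inversion writes the number of coprime pairs as
`∑ μ(d) S_d S'_d` over `d` coprime to `2g`, where `S_d` (`cnt`) counts the digit vectors with `d ∣ m`.

* Small moduli, `d ≤ g^(2l+2)`. By orthogonality `S_d - g^K / d` is an average of exponential sums,
  which factor over the digits. The residues `h w_i` modulo `d` satisfy a linear recurrence with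
  characteristic roots `g` and `1 / g`, which prevents them from all being tiny on a window of `2l + 4`
  consecutive digits (`exists_large_in_window`). Hence every window gains a constant factor
  `qfac g < 1`, and with `≫ l` disjoint windows the total error over these `d` is
  `≪ g^(2K - l/2)`. This requires `K ≫ l^2`, whence the `√N` in the theorem.
* Large moduli. By Cauchy-Schwarz it suffices to bound `∑ S_d^2`. The innermost `l` digits
  determine at most one solution modulo `d`, and the collisions of a middle block of digits are controlled
  by the divisor bound (`exists_tail_bound`).

This gives `g^(2K) ∑ μ(d) / d^2` for each admissible choice of `a, b, u, v`, up to `O(g^(2K - l/2))`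
(`exists_pair_bound`). The admissible choices are counted through the Jordan and Euler totients, and
the sum over `d` is an Euler product; together they give the constant of the theorem (`main_const`).
Finally `l` is taken of order `√N`; the finitely many small `N` are absorbed in the constant `C`.
-/

open Finset

/-- The set of palindromes of base `g` of length `N`: positive integers whose base `g`
digit expansion has length `N` and reads the same backwards as forwards. -/
def Palins (g N : ℕ) : Finset ℕ :=
  (Finset.Ico 1 (g ^ N)).filter
    (fun n => (Nat.digits g n).length = N ∧ (Nat.digits g n).reverse = Nat.digits g n)

/-- `ρ(g) = (g/(g-1))²` for even `g` and `(g + 1/3)/(g-1)` for odd `g`. -/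
noncomputable def rho (g : ℕ) : ℝ :=
  if Even g then ((g : ℝ) / ((g : ℝ) - 1)) ^ 2 else ((g : ℝ) + 1 / 3) / ((g : ℝ) - 1)

/-! ### Digit parametrization of the palindromes -/

/-- The coefficient of the `i`-th free digit, counted from the centre outwards, in a palindrome
of length `2 * K + 3`: that digit occurs in positions `K - i` and `K + 2 + i`. The truncated
subtraction is only used for `i ≤ K`. -/
def wt (g K i : ℕ) : ℕ := g ^ (K - i) + g ^ (K + 2 + i)

/-- The integer `∑ c_i w_i` attached to a digit vector `c` and a weight sequence `w`. -/
def dval {g n : ℕ} (w : ℕ → ℕ) (c : Fin n → Fin g) : ℕ := ∑ i, (c i : ℕ) * w i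

/-- The palindromic digit lists of length `2 * k + 1` with digits below `g`, zero end digits
allowed, built from the centre outwards. -/
def palLists (g : ℕ) : ℕ → Finset (List ℕ)
  | 0 => (range g).image (fun u => [u])
  | k + 1 => (range g ×ˢ palLists g k).image (fun q => q.1 :: (q.2 ++ [q.1]))

lemma mem_palLists {g k : ℕ} {p : List ℕ} :
    p ∈ palLists g k ↔ p.length = 2 * k + 1 ∧ (∀ x ∈ p, x < g) ∧ p.reverse = p := by
  induction k generalizing p with
  | zero =>
    simp only [palLists, mem_image, mem_range]
    constructor
    · rintro ⟨u, hu, rfl⟩; simp [hu]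
    · rintro ⟨h1, h2, -⟩
      obtain ⟨u, rfl⟩ := List.length_eq_one_iff.1 h1
      exact ⟨u, h2 u (by simp), rfl⟩
  | succ k ih =>
    simp only [palLists, mem_image, mem_product, mem_range, Prod.exists]
    constructor
    · rintro ⟨c, q, ⟨hc, hq⟩, rfl⟩
      obtain ⟨h1, h2, h3⟩ := ih.1 hq
      refine ⟨by simp [h1]; ring, ?_, by simp [h3]⟩
      intro x hx
      simp only [List.mem_cons, List.mem_append, List.not_mem_nil, or_false] at hx
      rcases hx with rfl | hx | rfl
      exacts [hc, h2 x hx, hc]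
    · rintro ⟨h1, h2, h3⟩
      cases List.Palindrome.of_reverse_eq h3 with
      | nil => simp at h1
      | singleton => simp at h1
      | cons_concat x hq =>
        rename_i q
        refine ⟨x, q, ⟨h2 x (by simp), ih.2 ⟨?_, fun y hy => h2 y (by simp [hy]), hq.reverse_eq⟩⟩, rfl⟩
        simp at h1; omega

lemma cons_append_injective {c c' : ℕ} {p p' : List ℕ}
    (h : c :: (p ++ [c]) = c' :: (p' ++ [c'])) : c = c' ∧ p = p' := by
  simp only [List.cons.injEq] at h
  obtain ⟨rfl, h⟩ := h
  exact ⟨rfl, List.append_cancel_right h⟩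

lemma ofDigits_cons_append {g k a : ℕ} {p : List ℕ} (hp : p.length = 2 * k + 1) :
    Nat.ofDigits g (a :: (p ++ [a])) = a * (1 + g ^ (2 * (k + 1))) + g * Nat.ofDigits g p := by
  rw [Nat.ofDigits_cons, Nat.ofDigits_append, hp, Nat.ofDigits_singleton]
  ring

lemma dval_snoc {g n : ℕ} (w : ℕ → ℕ) (c : Fin n → Fin g) (x : Fin g) :
    dval w (Fin.snoc (α := fun _ => Fin g) c x : Fin (n + 1) → Fin g) = dval w c + x * w n := by
  simp [dval, Fin.sum_univ_castSucc]

lemma dval_append {g n m : ℕ} (w : ℕ → ℕ) (c : Fin n → Fin g) (e : Fin m → Fin g) :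
    dval w (Fin.append c e) = dval w c + dval (fun i => w (n + i)) e := by
  simp [dval, Fin.sum_univ_add]

lemma dval_const_mul {g n : ℕ} {w w' : ℕ → ℕ} {s : ℕ} (h : ∀ i < n, w' i = s * w i)
    (c : Fin n → Fin g) : dval w' c = s * dval w c := by
  simp only [dval, mul_sum]
  refine sum_congr rfl fun i _ => ?_
  rw [h i i.2]; ring

lemma sum_snoc {g n : ℕ} {M : Type*} [AddCommMonoid M] (f : (Fin (n + 1) → Fin g) → M) :
    ∑ c, f c = ∑ x : Fin g, ∑ c : Fin n → Fin g, f (Fin.snoc (α := fun _ => Fin g) c x) := by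
  rw [← (Fin.snocEquiv (fun _ : Fin (n + 1) => Fin g)).sum_comp, Fintype.sum_prod_type]
  rfl

lemma sum_append {g n m : ℕ} {M : Type*} [AddCommMonoid M] (f : (Fin (n + m) → Fin g) → M) :
    ∑ c, f c = ∑ c : Fin n → Fin g, ∑ e : Fin m → Fin g, f (Fin.append c e) := by
  rw [← (Fin.appendEquiv n m).sum_comp, Fintype.sum_prod_type]
  rfl

lemma sum_palLists {g : ℕ} {M : Type*} [AddCommMonoid M] (k : ℕ) (f : ℕ → M) :
    ∑ p ∈ palLists g k, f (g * Nat.ofDigits g p) =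
      ∑ u ∈ range g, ∑ c : Fin k → Fin g, f (u * g ^ (k + 1) + dval (wt g k) c) := by
  induction k generalizing f with
  | zero =>
    rw [palLists, sum_image (by intro a _ b _ h; simpa using h)]
    simp [dval, mul_comm]
  | succ k ih =>
    rw [palLists, sum_image, sum_product]
    · have key : ∀ x, ∑ p ∈ palLists g k, f (g * Nat.ofDigits g (x :: (p ++ [x]))) =
          ∑ u ∈ range g, ∑ c : Fin k → Fin g,
            f (x * (g + g ^ (2 * k + 3)) + g * (u * g ^ (k + 1) + dval (wt g k) c)) := by
        intro x
        rw [← ih (fun y => f (x * (g + g ^ (2 * k + 3)) + g * y))]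
        refine sum_congr rfl fun p hp => ?_
        rw [ofDigits_cons_append (mem_palLists.1 hp).1]
        congr 1
        ring
      simp only [key]
      rw [sum_comm]
      refine sum_congr rfl fun u _ => ?_
      rw [sum_snoc, ← Fin.sum_univ_eq_sum_range (fun x => ∑ c : Fin k → Fin g,
            f (x * (g + g ^ (2 * k + 3)) + g * (u * g ^ (k + 1) + dval (wt g k) c)))]
      refine sum_congr rfl fun x _ => sum_congr rfl fun c _ => ?_
      rw [dval_snoc, dval_const_mul (w' := wt g (k + 1)) (w := wt g k) (s := g)]
      · congr 1
        simp only [wt]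
        rw [show k + 1 - k = 1 by omega]
        ring
      · intro i hi
        simp only [wt]
        rw [show k + 1 - i = k - i + 1 by omega]
        ring
    · rintro ⟨a, p⟩ _ ⟨b, q⟩ _ h
      obtain ⟨rfl, rfl⟩ := cons_append_injective h
      rfl

lemma palins_eq {g : ℕ} (hg : 2 ≤ g) (K : ℕ) :
    Palins g (2 * (K + 1) + 1) = (Ico 1 g ×ˢ palLists g K).image
      (fun q => Nat.ofDigits g (q.1 :: (q.2 ++ [q.1]))) := by
  have hdig : ∀ a p, a ∈ Ico 1 g → p ∈ palLists g K →
      Nat.digits g (Nat.ofDigits g (a :: (p ++ [a]))) = a :: (p ++ [a]) := by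
    intro a p ha hp
    rw [mem_Ico] at ha
    refine Nat.digits_ofDigits g (by omega) _ ?_ ?_
    · intro x hx
      simp only [List.mem_cons, List.mem_append, List.not_mem_nil, or_false] at hx
      rcases hx with rfl | hx | rfl
      exacts [ha.2, (mem_palLists.1 hp).2.1 x hx, ha.2]
    · intro h
      have h' : (a :: (p ++ [a])).getLast h = a := by simp
      omega
  ext m
  simp only [Palins, mem_filter, mem_image, mem_product, Prod.exists]
  constructor
  · rintro ⟨hm, hlen, hrev⟩
    rw [mem_Ico] at hm
    have hlt : ∀ x ∈ Nat.digits g m, x < g := fun x hx => Nat.digits_lt_base (by omega) hx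
    have hne : Nat.digits g m ≠ [] := by
      intro h; rw [h] at hlen; simp at hlen
    have hmem : Nat.digits g m ∈ palLists g (K + 1) := mem_palLists.2 ⟨by rw [hlen], hlt, hrev⟩
    simp only [palLists, mem_image, mem_product, mem_range, Prod.exists] at hmem
    obtain ⟨a, p, ⟨ha, hp⟩, h⟩ := hmem
    refine ⟨a, p, ⟨mem_Ico.2 ⟨?_, ha⟩, hp⟩, ?_⟩
    · have h0 := Nat.getLast_digit_ne_zero g (m := m) (by omega)
      have : (Nat.digits g m).getLast hne = a := by
        simp only [← h]
        simp
      rw [this] at h0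
      omega
    · rw [h, Nat.ofDigits_digits]
  · rintro ⟨a, p, ⟨ha, hp⟩, rfl⟩
    have hd := hdig a p ha hp
    obtain ⟨h1, h2, h3⟩ := mem_palLists.1 hp
    have ha' := mem_Ico.1 ha
    have hlen : (a :: (p ++ [a])).length = 2 * (K + 1) + 1 := by simp [h1]; ring
    refine ⟨mem_Ico.2 ⟨?_, ?_⟩, by rw [hd, hlen], by rw [hd]; simp [h3]⟩
    · rw [Nat.ofDigits_cons]; omega
    · rw [← hlen]
      refine Nat.ofDigits_lt_base_pow_length (by omega) ?_
      intro x hx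
      simp only [List.mem_cons, List.mem_append, List.not_mem_nil, or_false] at hx
      rcases hx with rfl | hx | rfl
      exacts [ha'.2, h2 x hx, ha'.2]

/-- Parametrization of the palindromes of length `2 * K + 3` by the outer digit `a ≠ 0`, the
central digit `u` and the `K` remaining free digits `c`. -/
lemma sum_palins {g : ℕ} (hg : 2 ≤ g) {M : Type*} [AddCommMonoid M] (K : ℕ) (f : ℕ → M) :
    ∑ m ∈ Palins g (2 * (K + 1) + 1), f m =
      ∑ a ∈ Ico 1 g, ∑ u ∈ range g, ∑ c : Fin K → Fin g,
        f (a * (1 + g ^ (2 * (K + 1))) + u * g ^ (K + 1) + dval (wt g K) c) := by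
  rw [palins_eq hg, sum_image, sum_product]
  · refine sum_congr rfl fun a ha => ?_
    simp only [add_assoc]
    rw [← sum_palLists K (fun y => f (a * (1 + g ^ (2 * (K + 1))) + y))]
    refine sum_congr rfl fun p hp => ?_
    rw [ofDigits_cons_append (mem_palLists.1 hp).1]
  · rintro ⟨a, p⟩ h1 ⟨b, q⟩ h2 h
    simp only [coe_product, Set.mem_prod, mem_coe] at h1 h2
    have key : ∀ a p, a ∈ Ico 1 g → p ∈ palLists g K → ∀ x ∈ a :: (p ++ [a]), x < g := by
      intro a p ha hp x hx
      simp only [List.mem_cons, List.mem_append, List.not_mem_nil, or_false] at hx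
      rcases hx with rfl | hx | rfl
      exacts [(mem_Ico.1 ha).2, (mem_palLists.1 hp).2.1 x hx, (mem_Ico.1 ha).2]
    have := Nat.ofDigits_inj_of_len_eq (b := g) (by omega)
      (by simp [(mem_palLists.1 h1.2).1, (mem_palLists.1 h2.2).1])
      (key a p h1.1 h1.2) (key b q h2.1 h2.2) h
    obtain ⟨rfl, rfl⟩ := cons_append_injective this
    rfl

lemma card_palins {g : ℕ} (hg : 2 ≤ g) (K : ℕ) :
    (Palins g (2 * (K + 1) + 1)).card = (g - 1) * (g * g ^ K) := by
  rw [card_eq_sum_ones, sum_palins hg]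
  simp

/-- Up to shifts, the value of a centred block is the integer with digits `c` together with its
digit reversal, each appearing in its own range of positions. -/
lemma dval_wt_eq {g l : ℕ} (c : Fin l → Fin g) :
    dval (wt g l) c = g * (finFunctionFinEquiv (fun i => c (Fin.rev i)) : ℕ) +
      g ^ (l + 2) * (finFunctionFinEquiv c : ℕ) := by
  rw [finFunctionFinEquiv_apply, finFunctionFinEquiv_apply, dval, mul_sum, mul_sum,
    ← Equiv.sum_comp Fin.revPerm (fun i : Fin l => g * ((c (Fin.rev i) : ℕ) * g ^ (i : ℕ))),
    ← sum_add_distrib]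
  refine sum_congr rfl fun i _ => ?_
  simp only [wt, Fin.revPerm_apply, Fin.rev_rev, Fin.val_rev]
  rw [show l - (i : ℕ) = l - ((i : ℕ) + 1) + 1 by omega]
  ring

lemma dval_wt_lt {g l : ℕ} (hg : 2 ≤ g) (c : Fin l → Fin g) : dval (wt g l) c < g ^ (2 * l + 2) := by
  rw [dval_wt_eq]
  have h1 := (finFunctionFinEquiv (fun i => c (Fin.rev i))).2
  have h2 := (finFunctionFinEquiv c).2
  set A := (finFunctionFinEquiv (fun i => c (Fin.rev i)) : ℕ)
  set B := (finFunctionFinEquiv c : ℕ)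
  have h3 : g * A + g ^ (l + 2) * B < g ^ (l + 2) * (B + 1) := by
    have : g * A < g * g ^ l := by apply Nat.mul_lt_mul_of_pos_left h1; omega
    have h5 : g * g ^ l ≤ g ^ (l + 2) := by
      rw [← pow_succ']; exact Nat.pow_le_pow_right (by omega) (by omega)
    rw [mul_add]; omega
  calc _ < _ := h3
    _ ≤ g ^ (l + 2) * g ^ l := Nat.mul_le_mul_left _ h2
    _ = _ := by ring

lemma dval_wt_injective {g l : ℕ} (hg : 2 ≤ g) :
    Function.Injective (fun c : Fin l → Fin g => dval (wt g l) c) := by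
  have key : ∀ c : Fin l → Fin g, dval (wt g l) c / g ^ (l + 2) = (finFunctionFinEquiv c : ℕ) := by
    intro c
    rw [dval_wt_eq]
    have h1 := (finFunctionFinEquiv (fun i => c (Fin.rev i))).2
    set A := (finFunctionFinEquiv (fun i => c (Fin.rev i)) : ℕ)
    have : g * A < g ^ (l + 2) := by
      calc g * A < g * g ^ l := by apply Nat.mul_lt_mul_of_pos_left h1; omega
        _ ≤ _ := by rw [← pow_succ']; exact Nat.pow_le_pow_right (by omega) (by omega)
    rw [Nat.add_mul_div_left _ _ (by positivity), Nat.div_eq_of_lt this, zero_add]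
  intro c e h
  apply finFunctionFinEquiv.injective
  apply Fin.ext
  rw [← key c, ← key e]
  simp only at h
  rw [h]

lemma wt_scale {g K l i : ℕ} (hl : l ≤ K) (hi : i ≤ l) :
    wt g K i = g ^ (K - l) * wt g l i := by
  simp only [wt]
  rw [show K - i = (K - l) + (l - i) by omega, show K + 2 + i = (K - l) + (l + 2 + i) by omega,
    pow_add, pow_add g (K - l) (l + 2 + i)]
  ring

/-! ### Divisor bound and congruence counts for large moduli -/

/-- The squarefree divisors of `n`. -/
def sqfreeDivs (n : ℕ) : Finset ℕ := n.divisors.filter Squarefree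

lemma card_sqfreeDivs_le (n : ℕ) : (sqfreeDivs n).card ≤ 2 ^ n.primeFactors.card := by
  rw [← card_powerset]
  refine card_le_card_of_injOn Nat.primeFactors ?_ ?_
  · intro d hd
    simp only [sqfreeDivs, coe_filter, Set.mem_ofPred_eq, Nat.mem_divisors] at hd
    simpa using Nat.primeFactors_mono hd.1.1 hd.1.2
  · intro d hd e he h
    simp only [sqfreeDivs, coe_filter, Set.mem_ofPred_eq, Nat.mem_divisors] at hd he
    rw [← Nat.prod_primeFactors_of_squarefree hd.2, ← Nat.prod_primeFactors_of_squarefree he.2, h]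

/-- Primes `p ≥ B` contribute at least `B` to the product of the primes dividing `n`, and there
are fewer than `B` smaller primes. -/
lemma pow_card_primeFactors_le (B n : ℕ) (hB : 1 ≤ B) (hn : n ≠ 0) :
    B ^ n.primeFactors.card ≤ B ^ B * n := by
  have h1 : ∏ p ∈ n.primeFactors, B ≤
      ∏ p ∈ n.primeFactors, ((if p < B then B else 1) * p) := by
    refine prod_le_prod' fun p hp => ?_
    have := (Nat.prime_of_mem_primeFactors hp).one_lt
    split_ifs with h
    · nlinarith
    · omega
  rw [prod_const, prod_mul_distrib] at h1
  refine h1.trans (Nat.mul_le_mul ?_ (Nat.le_of_dvd (by omega) (Nat.prod_primeFactors_dvd n)))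
  rw [prod_ite, prod_const, prod_const_one, mul_one]
  refine Nat.pow_le_pow_right hB ?_
  calc _ ≤ (range B).card := card_le_card (by intro p; simp)
    _ = B := by simp

/-- The divisor bound `≪ n^(1/12)`; on `n ≤ g^(6m)` it reads `≪ g^(m/2)`. -/
lemma exists_sqfreeDivs_bound : ∃ C : ℝ, 1 ≤ C ∧ ∀ g m n : ℕ, n ≠ 0 → n ≤ g ^ (6 * m) →
    ((sqfreeDivs n).card : ℝ) ≤ C * (Real.sqrt g) ^ m := by
  obtain ⟨B, hB⟩ : ∃ B : ℕ, B = 2 ^ 12 := ⟨_, rfl⟩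
  have hB1 : 1 ≤ B := by omega
  refine ⟨(B : ℝ) ^ B, one_le_pow₀ (by exact_mod_cast hB1), fun g m n hn hle => ?_⟩
  have h1 : (sqfreeDivs n).card ^ 12 ≤ B ^ B * n := by
    calc _ ≤ (2 ^ n.primeFactors.card) ^ 12 := Nat.pow_le_pow_left (card_sqfreeDivs_le n) 12
      _ = B ^ n.primeFactors.card := by rw [hB, ← pow_mul, ← pow_mul, mul_comm]
      _ ≤ _ := pow_card_primeFactors_le B n hB1 hn
  have h2 : ((sqfreeDivs n).card : ℝ) ^ 12 ≤ (B : ℝ) ^ B * (g : ℝ) ^ (6 * m) := by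
    calc _ ≤ (B : ℝ) ^ B * n := by exact_mod_cast h1
      _ ≤ _ := by gcongr; exact_mod_cast hle
  have h3 : (1 : ℝ) ≤ (B : ℝ) ^ B := one_le_pow₀ (by exact_mod_cast hB1)
  refine le_of_pow_le_pow_left₀ (n := 12) (by norm_num) (by positivity) (h2.trans ?_)
  rw [mul_pow, ← pow_mul (Real.sqrt g) m 12, mul_comm m 12, show 12 * m = 2 * (6 * m) by ring, pow_mul (Real.sqrt g) 2,
    Real.sq_sqrt (by positivity)]
  gcongr
  exact le_self_pow₀ h3 (by norm_num)

/-- The number of digit vectors `c` for which `d` divides `t + ∑ c_i w_i`. -/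
def cnt (g K d t : ℕ) : ℕ := (univ.filter fun c : Fin K → Fin g => d ∣ t + dval (wt g K) c).card

lemma cnt_eq_sum (g K d t : ℕ) : cnt g K d t =
    ∑ c : Fin K → Fin g, if d ∣ t + dval (wt g K) c then 1 else 0 := by
  rw [cnt, card_filter]

/-- The `l` innermost free digits produce integers that are, after removing a power of `g`,
distinct and below `g^(2l+2)`, so at most one choice of them lies in a given class modulo `d`. -/
lemma block_le_one {g K l d : ℕ} (hg : 2 ≤ g) (hl : l ≤ K) (hd : g ^ (2 * l + 2) ≤ d)
    (hcop : d.Coprime g) (r : ℕ) :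
    ∑ y : Fin l → Fin g, (if d ∣ r + dval (wt g K) y then 1 else 0) ≤ 1 := by
  rw [← card_filter]
  refine card_le_one.2 fun y hy z hz => ?_
  simp only [mem_filter, mem_univ, true_and] at hy hz
  have e : ∀ c : Fin l → Fin g, dval (wt g K) c = g ^ (K - l) * dval (wt g l) c :=
    dval_const_mul fun i hi => wt_scale hl hi.le
  rw [e] at hy hz
  have h1 : r + g ^ (K - l) * dval (wt g l) y ≡ r + g ^ (K - l) * dval (wt g l) z [MOD d] :=
    ((Nat.modEq_zero_iff_dvd).2 hy).trans ((Nat.modEq_zero_iff_dvd).2 hz).symm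
  have h2 := Nat.ModEq.cancel_left_of_coprime (Nat.Coprime.pow_right _ hcop)
    (Nat.ModEq.add_left_cancel' _ h1)
  exact dval_wt_injective hg (Nat.ModEq.eq_of_lt_of_lt h2 ((dval_wt_lt hg y).trans_le hd)
    ((dval_wt_lt hg z).trans_le hd))

lemma cnt_le {g l r d t : ℕ} (hg : 2 ≤ g) (hd : g ^ (2 * l + 2) ≤ d) (hcop : d.Coprime g) :
    cnt g (l + r) d t ≤ g ^ r := by
  rw [cnt_eq_sum, sum_append, sum_comm]
  calc _ ≤ ∑ e : Fin r → Fin g, 1 := by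
        refine sum_le_sum fun e _ => ?_
        have := block_le_one (K := l + r) hg (by omega) hd hcop
          (t + dval (fun i => wt g (l + r) (l + i)) e)
        refine le_trans (le_of_eq ?_) this
        refine sum_congr rfl fun y _ => ?_
        rw [dval_append, show t + (dval (wt g (l + r)) y +
          dval (fun i => wt g (l + r) (l + i)) e) = t + dval (fun i => wt g (l + r) (l + i)) e +
            dval (wt g (l + r)) y by ring]
    _ = g ^ r := by simp

/-- The number of pairs of blocks of `k` consecutive free digits, starting at position `l`, whose
values agree modulo `d`. -/
def coll (g K l k d : ℕ) : ℕ :=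
  ∑ x : Fin k → Fin g, ∑ x' : Fin k → Fin g,
    if dval (fun i => wt g K (l + i)) x ≡ dval (fun i => wt g K (l + i)) x' [MOD d] then 1 else 0

/-- Two applications of Cauchy-Schwarz, over the outer `r` digits and over the inner `l` digits,
bound the square of the count by the collision number of the middle block. -/
lemma cnt_sq_le {g l k r d t : ℕ} (hg : 2 ≤ g) (hd : g ^ (2 * l + 2) ≤ d) (hcop : d.Coprime g) :
    cnt g (l + k + r) d t ^ 2 ≤ g ^ (2 * r) * (g ^ l * coll g (l + k + r) l k d) := by
  set K := l + k + r with hK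
  let X : (Fin k → Fin g) → ℕ := dval (fun i => wt g K (l + i))
  let T : (Fin r → Fin g) → ℕ := fun e => ∑ y : Fin l → Fin g, ∑ x : Fin k → Fin g,
    if d ∣ t + (dval (wt g K) y + X x + dval (fun i => wt g K (l + k + i)) e) then 1 else 0
  have h1 : cnt g K d t = ∑ e, T e := by
    rw [cnt_eq_sum, hK, sum_append, sum_comm]
    refine sum_congr rfl fun e _ => ?_
    rw [sum_append]
    refine sum_congr rfl fun y _ => sum_congr rfl fun x _ => ?_
    rw [dval_append, dval_append]
  have h2 : ∀ e, T e ^ 2 ≤ g ^ l * coll g K l k d := by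
    intro e
    set R := dval (fun i => wt g K (l + k + i)) e
    calc T e ^ 2 ≤ (univ : Finset (Fin l → Fin g)).card * ∑ y : Fin l → Fin g,
          (∑ x : Fin k → Fin g, if d ∣ t + (dval (wt g K) y + X x + R) then 1 else 0) ^ 2 :=
          sq_sum_le_card_mul_sum_sq
      _ ≤ g ^ l * coll g K l k d := by
        rw [show (univ : Finset (Fin l → Fin g)).card = g ^ l by simp]
        refine Nat.mul_le_mul_left _ ?_
        simp only [sq, sum_mul_sum]
        rw [sum_comm]
        refine sum_le_sum fun x _ => ?_
        rw [sum_comm]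
        refine sum_le_sum fun x' _ => ?_
        split_ifs with h
        · refine le_trans (sum_le_sum fun y _ => ?_)
            (block_le_one (K := K) hg (by omega) hd hcop (t + X x + R))
          rw [show t + X x + R + dval (wt g K) y = t + (dval (wt g K) y + X x + R) by ring]
          split_ifs <;> simp
        · refine le_of_eq (sum_eq_zero fun y _ => ?_)
          by_contra hne
          apply h
          have ha : d ∣ t + (dval (wt g K) y + X x + R) := by
            by_contra hh; simp [hh] at hne
          have hb : d ∣ t + (dval (wt g K) y + X x' + R) := by
            by_contra hh; simp [hh] at hne
          have h3 : t + dval (wt g K) y + R + X x ≡ t + dval (wt g K) y + R + X x' [MOD d] := by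
            refine Nat.ModEq.trans ((Nat.modEq_zero_iff_dvd).2 ?_)
              ((Nat.modEq_zero_iff_dvd).2 ?_).symm
            · convert ha using 1; ring
            · convert hb using 1; ring
          exact Nat.ModEq.add_left_cancel' _ h3
  rw [h1]
  calc (∑ e, T e) ^ 2 ≤ (univ : Finset (Fin r → Fin g)).card * ∑ e, T e ^ 2 :=
        sq_sum_le_card_mul_sum_sq
    _ ≤ g ^ r * ∑ e : Fin r → Fin g, g ^ l * coll g K l k d := by
        rw [show (univ : Finset (Fin r → Fin g)).card = g ^ r by simp]
        exact Nat.mul_le_mul_left _ (sum_le_sum fun e _ => h2 e)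
    _ = _ := by
        rw [sum_const, card_univ, Fintype.card_fun, Fintype.card_fin, Fintype.card_fin, smul_eq_mul]
        ring

/-- Off-diagonal collisions modulo `d` force `d` to divide a fixed nonzero integer, so each pair of
distinct blocks is counted for few moduli; the diagonal contributes `g^k` per modulus. -/
lemma sum_coll_le {g K l k : ℕ} (hg : 2 ≤ g) (hK : l + k ≤ K) (D : Finset ℕ)
    (hD : ∀ d ∈ D, Squarefree d ∧ d.Coprime g) {B : ℝ} (hB0 : 0 ≤ B)
    (hB : ∀ n : ℕ, n ≠ 0 → n ≤ g ^ (2 * (l + k) + 2) → ((sqfreeDivs n).card : ℝ) ≤ B) :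
    ∑ d ∈ D, (coll g K l k d : ℝ) ≤ D.card * (g : ℝ) ^ k + (g : ℝ) ^ (2 * k) * B := by
  let X : (Fin k → Fin g) → ℕ := dval (fun i => wt g (l + k) (l + i))
  let y0 : Fin l → Fin g := fun _ => ⟨0, by omega⟩
  have hX : ∀ x, X x = dval (wt g (l + k)) (Fin.append y0 x) := by
    intro x
    rw [dval_append]
    simp [X, y0, dval]
  have hlt : ∀ x, X x < g ^ (2 * (l + k) + 2) := fun x => by rw [hX]; exact dval_wt_lt hg _
  have hinj : ∀ x x', X x = X x' → x = x' := by
    intro x x' h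
    rw [hX, hX] at h
    have := dval_wt_injective hg h
    ext i
    have h2 := congrFun this (Fin.natAdd l i)
    simpa using congrArg Fin.val h2
  have hscale : ∀ x : Fin k → Fin g,
      dval (fun i => wt g K (l + i)) x = g ^ (K - (l + k)) * X x :=
    dval_const_mul fun i hi => wt_scale hK (by omega)
  have hmod : ∀ d ∈ D, ∀ x x', dval (fun i => wt g K (l + i)) x ≡
      dval (fun i => wt g K (l + i)) x' [MOD d] → X x ≡ X x' [MOD d] := by
    intro d hd x x' h
    rw [hscale, hscale] at h
    exact Nat.ModEq.cancel_left_of_coprime (Nat.Coprime.pow_right _ (hD d hd).2) h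
  have hpair : ∀ x x' : Fin k → Fin g, ∑ d ∈ D,
      ((if dval (fun i => wt g K (l + i)) x ≡ dval (fun i => wt g K (l + i)) x' [MOD d]
        then 1 else 0 : ℕ) : ℝ) ≤ (if x = x' then (D.card : ℝ) else 0) + B := by
    intro x x'
    rw [← Nat.cast_sum, ← card_filter]
    split_ifs with h
    · have : ((D.filter fun d => dval (fun i => wt g K (l + i)) x ≡
        dval (fun i => wt g K (l + i)) x' [MOD d]).card : ℝ) ≤ D.card := by
        exact_mod_cast card_filter_le _ _
      linarith
    · rw [zero_add]
      have hne : X x ≠ X x' := fun hh => h (hinj _ _ hh)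
      have hn0 : ((X x' : ℤ) - X x).natAbs ≠ 0 := by omega
      refine le_trans ?_ (hB ((X x' : ℤ) - X x).natAbs hn0 ?_)
      · refine Nat.cast_le.2 (card_le_card fun d hd => ?_)
        rw [mem_filter] at hd
        rw [sqfreeDivs, mem_filter, Nat.mem_divisors]
        refine ⟨⟨?_, hn0⟩, (hD d hd.1).1⟩
        rw [← Int.natCast_dvd]
        exact (Nat.modEq_iff_dvd).1 (hmod d hd.1 x x' hd.2)
      · have := hlt x
        have := hlt x'
        omega
  calc ∑ d ∈ D, (coll g K l k d : ℝ) = ∑ x : Fin k → Fin g, ∑ x' : Fin k → Fin g, ∑ d ∈ D,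
      ((if dval (fun i => wt g K (l + i)) x ≡ dval (fun i => wt g K (l + i)) x' [MOD d]
        then 1 else 0 : ℕ) : ℝ) := by
        simp only [coll, Nat.cast_sum]
        rw [sum_comm]
        refine sum_congr rfl fun x _ => ?_
        rw [sum_comm]
    _ ≤ ∑ x : Fin k → Fin g, ∑ x' : Fin k → Fin g, ((if x = x' then (D.card : ℝ) else 0) + B) :=
        sum_le_sum fun x _ => sum_le_sum fun x' _ => hpair x x'
    _ = _ := by
        simp [sum_add_distrib]
        ring

/-! ### Second moment over large moduli -/

/-- The squarefree integers in `(a, b]` that are coprime to `g`. -/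
def moduli (g a b : ℕ) : Finset ℕ := (Ioc a b).filter fun d => Squarefree d ∧ d.Coprime g

lemma sum_cnt_le {g K t Z a : ℕ} (ht : 0 < t) {B : ℝ}
    (hB : ∀ c : Fin K → Fin g, ((sqfreeDivs (t + dval (wt g K) c)).card : ℝ) ≤ B) :
    ∑ d ∈ moduli g a Z, (cnt g K d t : ℝ) ≤ (g : ℝ) ^ K * B := by
  calc ∑ d ∈ moduli g a Z, (cnt g K d t : ℝ)
      = ∑ c : Fin K → Fin g, ∑ d ∈ moduli g a Z,
        ((if d ∣ t + dval (wt g K) c then 1 else 0 : ℕ) : ℝ) := by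
        simp only [cnt_eq_sum, Nat.cast_sum]
        rw [sum_comm]
    _ ≤ ∑ c : Fin K → Fin g, B := by
        refine sum_le_sum fun c _ => le_trans ?_ (hB c)
        rw [← Nat.cast_sum, ← card_filter]
        refine Nat.cast_le.2 (card_le_card fun d hd => ?_)
        simp only [moduli, mem_filter] at hd
        rw [sqfreeDivs, mem_filter, Nat.mem_divisors]
        exact ⟨⟨hd.2, by omega⟩, hd.1.2.1⟩
    _ = _ := by simp

/-- Bound for the second moment in which one factor is estimated pointwise by `cnt_le` and the
other on average, through the number of squarefree divisors. It is efficient once the modulus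
exceeds a fixed power of the size of the palindromes. -/
lemma tail_large {g K t Z l : ℕ} (hg : 2 ≤ g) (ht : 0 < t) (hl : l ≤ K) {B : ℝ}
    (hB : ∀ c : Fin K → Fin g, ((sqfreeDivs (t + dval (wt g K) c)).card : ℝ) ≤ B) :
    ∑ d ∈ moduli g (g ^ (2 * l + 2)) Z, (cnt g K d t : ℝ) ^ 2 ≤
      (g : ℝ) ^ (K - l) * ((g : ℝ) ^ K * B) := by
  calc _ ≤ ∑ d ∈ moduli g (g ^ (2 * l + 2)) Z, (g : ℝ) ^ (K - l) * (cnt g K d t : ℝ) := by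
        refine sum_le_sum fun d hd => ?_
        simp only [moduli, mem_filter, mem_Ioc] at hd
        have h := cnt_le (r := K - l) (t := t) hg hd.1.1.le hd.2.2
        rw [show l + (K - l) = K by omega] at h
        rw [sq]
        gcongr
        exact_mod_cast h
    _ ≤ _ := by
        rw [← mul_sum]
        gcongr
        exact sum_cnt_le ht hB

/-- Second moment over the moduli in `(g^(2l+2), g^(2l+4)]`, by the large-sieve type inequality
`cnt_sq_le` with a middle block of `2l + 4` digits, for which the diagonal and off-diagonal terms
of `sum_coll_le` balance. -/
lemma tail_mid {g K t l : ℕ} (hg : 2 ≤ g) (hl : 3 * l + 4 ≤ K) {B : ℝ} (hB0 : 0 ≤ B)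
    (hB : ∀ n : ℕ, n ≠ 0 → n ≤ g ^ (6 * (l + 2)) → ((sqfreeDivs n).card : ℝ) ≤ B) :
    ∑ d ∈ moduli g (g ^ (2 * l + 2)) (g ^ (2 * l + 4)), (cnt g K d t : ℝ) ^ 2 ≤
      (g : ℝ) ^ (2 * K - l) * (1 + B) := by
  obtain ⟨r, rfl⟩ : ∃ r, K = l + (2 * l + 4) + r := ⟨K - (3 * l + 4), by omega⟩
  set K := l + (2 * l + 4) + r
  set D := moduli g (g ^ (2 * l + 2)) (g ^ (2 * l + 4)) with hDdef
  have hcard : (D.card : ℝ) ≤ (g : ℝ) ^ (2 * l + 4) := by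
    have : D.card ≤ g ^ (2 * l + 4) := by
      refine (card_filter_le _ _).trans ?_
      simp
    exact_mod_cast this
  have hc := sum_coll_le (g := g) (K := K) (l := l) (k := 2 * l + 4) hg (by omega) D
    (fun d hd => by simp only [hDdef, moduli, mem_filter] at hd; exact hd.2) hB0
    (fun n hn hle => hB n hn (hle.trans (Nat.pow_le_pow_right (by omega) (by omega))))
  calc ∑ d ∈ D, (cnt g K d t : ℝ) ^ 2
      ≤ ∑ d ∈ D, (g : ℝ) ^ (2 * r) * ((g : ℝ) ^ l * coll g K l (2 * l + 4) d) := by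
        refine sum_le_sum fun d hd => ?_
        simp only [hDdef, moduli, mem_filter, mem_Ioc] at hd
        exact_mod_cast cnt_sq_le (r := r) (k := 2 * l + 4) (t := t) hg hd.1.1.le hd.2.2
    _ = (g : ℝ) ^ (2 * r) * ((g : ℝ) ^ l * ∑ d ∈ D, (coll g K l (2 * l + 4) d : ℝ)) := by
        rw [mul_sum, mul_sum]
    _ ≤ (g : ℝ) ^ (2 * r) * ((g : ℝ) ^ l * ((g : ℝ) ^ (2 * l + 4) * (g : ℝ) ^ (2 * l + 4) +
          (g : ℝ) ^ (2 * (2 * l + 4)) * B)) := by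
        gcongr
        exact hc.trans (by gcongr)
    _ = (g : ℝ) ^ (2 * K - l) * (1 + B) := by
        rw [show 2 * K - l = 2 * r + l + 2 * (2 * l + 4) by omega]
        ring

/-- Second moment over all moduli beyond `g^(2l+2)`: the ranges of `tail_mid` are summed
geometrically and `tail_large` covers what lies beyond the last of them. -/
lemma exists_tail_bound {g : ℕ} (hg : 2 ≤ g) : ∃ C : ℝ, 0 < C ∧ ∀ K t Z l : ℕ, 0 < t →
    (∀ c : Fin K → Fin g, t + dval (wt g K) c ≤ g ^ (2 * K + 3)) → 3 * l + 1 ≤ K →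
    ∑ d ∈ moduli g (g ^ (2 * l + 2)) Z, (cnt g K d t : ℝ) ^ 2 ≤
      C * ((g : ℝ) ^ K) ^ 2 * ((Real.sqrt g)⁻¹) ^ l := by
  obtain ⟨C, hC1, hC⟩ := exists_sqfreeDivs_bound
  set b := Real.sqrt g with hb
  have hb2 : b ^ 2 = g := Real.sq_sqrt (by positivity)
  have hb1 : 1 < b := by
    rw [hb, Real.lt_sqrt (by norm_num)]
    have : (2 : ℝ) ≤ g := by exact_mod_cast hg
    linarith
  have hb0 : 0 < b := by linarith
  have hg0 : (0 : ℝ) < g := by positivity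
  -- `A` is the sum of the geometric series with ratio `1 / b`
  set A := (1 - b⁻¹)⁻¹ with hA
  have hbi : b⁻¹ < 1 := inv_lt_one_of_one_lt₀ hb1
  have hA1 : 1 ≤ A := (one_le_inv₀ (by linarith)).2 (by have := inv_pos.2 hb0; linarith)
  have hAeq : A * b⁻¹ + 1 = A := by
    have : A * (1 - b⁻¹) = 1 := inv_mul_cancel₀ (by linarith)
    linarith
  refine ⟨2 * C * b ^ 2 * A, by positivity, fun K t Z l ht hsz hl => ?_⟩
  have hpow : ∀ j m : ℕ, j ≤ m → (g : ℝ) ^ (m - j) = g ^ m * (b⁻¹) ^ (2 * j) := by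
    intro j m hjm
    rw [pow_mul, inv_pow, hb2, inv_pow, pow_sub₀ _ hg0.ne' hjm]
  have hstep : ∀ j, (b⁻¹) ^ (2 * j) * b ^ (j + 2) = b ^ 2 * (b⁻¹) ^ j := by
    intro j
    rw [two_mul, pow_add, pow_add, inv_pow]
    field_simp
  have hlarge : ∀ j, K ≤ 3 * j + 3 → j ≤ K →
      ∑ d ∈ moduli g (g ^ (2 * j + 2)) Z, (cnt g K d t : ℝ) ^ 2 ≤
        2 * C * b ^ 2 * A * ((g : ℝ) ^ K) ^ 2 * (b⁻¹) ^ j := by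
    intro j hj hjK
    refine (tail_large (B := C * b ^ (j + 2)) hg ht hjK fun c => ?_).trans ?_
    · exact hC g (j + 2) _ (by omega) ((hsz c).trans (Nat.pow_le_pow_right (by omega) (by omega)))
    · rw [hpow j K hjK]
      calc _ = C * ((g : ℝ) ^ K) ^ 2 * ((b⁻¹) ^ (2 * j) * b ^ (j + 2)) := by ring
        _ = 1 * C * b ^ 2 * 1 * ((g : ℝ) ^ K) ^ 2 * (b⁻¹) ^ j := by rw [hstep]; ring
        _ ≤ _ := by gcongr; norm_num
  have hmid : ∀ j, 3 * j + 4 ≤ K →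
      ∑ d ∈ moduli g (g ^ (2 * j + 2)) (g ^ (2 * j + 4)), (cnt g K d t : ℝ) ^ 2 ≤
        2 * C * b ^ 2 * ((g : ℝ) ^ K) ^ 2 * (b⁻¹) ^ j := by
    intro j hj
    refine (tail_mid (B := C * b ^ (j + 2)) hg hj (by positivity) fun n hn hle => ?_).trans ?_
    · exact hC g (j + 2) _ hn hle
    · rw [hpow j (2 * K) (by omega)]
      have h1 : 1 ≤ C * b ^ (j + 2) := by
        have := one_le_pow₀ hb1.le (n := j + 2)
        nlinarith
      calc _ ≤ (g : ℝ) ^ (2 * K) * b⁻¹ ^ (2 * j) * (C * b ^ (j + 2) + C * b ^ (j + 2)) := by gcongr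
        _ = 2 * C * (g : ℝ) ^ (2 * K) * ((b⁻¹) ^ (2 * j) * b ^ (j + 2)) := by ring
        _ = _ := by rw [hstep, mul_comm 2 K, pow_mul]; ring
  -- descending induction on `l`, phrased through the distance `n` to the last usable block
  have main : ∀ n j, 3 * j + 1 ≤ K → K ≤ 3 * (j + n) + 3 →
      ∑ d ∈ moduli g (g ^ (2 * j + 2)) Z, (cnt g K d t : ℝ) ^ 2 ≤
        2 * C * b ^ 2 * A * ((g : ℝ) ^ K) ^ 2 * (b⁻¹) ^ j := by
    intro n
    induction n with
    | zero => intro j h1 h2; exact hlarge j (by omega) (by omega)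
    | succ n ih =>
      intro j h1 h2
      by_cases h3 : 3 * j + 4 ≤ K
      · have hsub : moduli g (g ^ (2 * j + 2)) Z ⊆
            moduli g (g ^ (2 * j + 2)) (g ^ (2 * j + 4)) ∪ moduli g (g ^ (2 * (j + 1) + 2)) Z := by
          intro d
          simp only [moduli, mem_filter, mem_Ioc, mem_union, show 2 * (j + 1) + 2 = 2 * j + 4 by ring]
          rintro ⟨⟨h4, h5⟩, h6⟩
          rcases le_or_gt d (g ^ (2 * j + 4)) with h | h
          · exact Or.inl ⟨⟨h4, h⟩, h6⟩
          · exact Or.inr ⟨⟨h, h5⟩, h6⟩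
        calc _ ≤ ∑ d ∈ moduli g (g ^ (2 * j + 2)) (g ^ (2 * j + 4)) ∪
                moduli g (g ^ (2 * (j + 1) + 2)) Z, (cnt g K d t : ℝ) ^ 2 :=
              sum_le_sum_of_subset_of_nonneg hsub fun _ _ _ => by positivity
          _ ≤ ∑ d ∈ moduli g (g ^ (2 * j + 2)) (g ^ (2 * j + 4)), (cnt g K d t : ℝ) ^ 2 +
                ∑ d ∈ moduli g (g ^ (2 * (j + 1) + 2)) Z, (cnt g K d t : ℝ) ^ 2 := by
              rw [← sum_union_inter]
              exact le_add_of_nonneg_right (sum_nonneg fun _ _ => by positivity)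
          _ ≤ 2 * C * b ^ 2 * ((g : ℝ) ^ K) ^ 2 * (b⁻¹) ^ j +
                2 * C * b ^ 2 * A * ((g : ℝ) ^ K) ^ 2 * (b⁻¹) ^ (j + 1) :=
              add_le_add (hmid j h3) (ih (j + 1) (by omega) (by omega))
          _ = 2 * C * b ^ 2 * (A * b⁻¹ + 1) * ((g : ℝ) ^ K) ^ 2 * (b⁻¹) ^ j := by ring
          _ = _ := by rw [hAeq]
      · exact hlarge j (by omega) (by omega)
  exact main K l hl (by omega)

/-! ### Equidistribution modulo small integers -/

/-- The weights satisfy a linear recurrence with characteristic roots `g` and `1 / g`. -/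
lemma wt_rec {g K i : ℕ} (hi : i + 2 ≤ K) :
    g * wt g K (i + 2) + g * wt g K i = (g ^ 2 + 1) * wt g K (i + 1) := by
  obtain ⟨m, rfl⟩ : ∃ m, K = i + 2 + m := ⟨K - (i + 2), by omega⟩
  simp only [wt]
  rw [show i + 2 + m - (i + 2) = m by omega, show i + 2 + m - i = m + 2 by omega,
    show i + 2 + m - (i + 1) = m + 1 by omega]
  ring

/-- Two consecutive weights generate the unit ideal modulo any `d` coprime to `2 * g`. -/
lemma eq_zero_of_wt {g K d i : ℕ} (hi : i + 1 ≤ K) (hcop : d.Coprime (2 * g))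
    {h : ZMod d} (h0 : h * (wt g K i : ZMod d) = 0) (h1 : h * (wt g K (i + 1) : ZMod d) = 0) :
    h = 0 := by
  have hgu : IsUnit (g : ZMod d) :=
    (ZMod.isUnit_iff_coprime g d).2 (Nat.Coprime.coprime_mul_left_right hcop).symm
  have h2u : IsUnit (2 : ZMod d) := by
    have := (ZMod.isUnit_iff_coprime 2 d).2 (Nat.Coprime.coprime_mul_right_right hcop).symm
    simpa using this
  obtain ⟨m, rfl⟩ : ∃ m, K = i + 1 + m := ⟨K - (i + 1), by omega⟩
  simp only [wt] at h0 h1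
  rw [show i + 1 + m - i = m + 1 by omega] at h0
  rw [show i + 1 + m - (i + 1) = m by omega] at h1
  push_cast at h0 h1
  have h3 : (h * ((g : ZMod d) ^ 2 - 1)) * (g : ZMod d) ^ (2 * i + m + 3) = 0 := by
    linear_combination (g : ZMod d) * h1 - h0
  have h4 : h * ((g : ZMod d) ^ 2 - 1) = 0 := (hgu.pow _).mul_left_eq_zero.1 h3
  have h5 : h * (g : ZMod d) ^ 2 = h := by linear_combination h4
  have h6 : ∀ n : ℕ, h * ((g : ZMod d) ^ 2) ^ n = h := by
    intro n
    induction n with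
    | zero => simp
    | succ n ih => rw [pow_succ, ← mul_assoc, ih, h5]
  have h7 : (h * 2) * (g : ZMod d) ^ (m + 1) = 0 := by
    have := h6 (i + 1)
    linear_combination h0 - (g : ZMod d) ^ (m + 1) * this
  exact h2u.mul_left_eq_zero.1 ((hgu.pow _).mul_left_eq_zero.1 h7)

/-- Among `L + 2` consecutive residues `h * w_i` modulo `d ≤ g^L`, one is at distance at least
`d / (2 (g+1)^2)` from `0`. Otherwise the recurrence `wt_rec` would hold for the least absolute
residues themselves; its solutions are combinations of `g^p` and `g^(-p)`, and an integral one that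
stays below `d ≤ g^L` on the whole window vanishes. -/
lemma exists_large_in_window {g K d L i₀ : ℕ} (hg : 2 ≤ g) [NeZero d] (hcop : d.Coprime (2 * g))
    (hd : d ≤ g ^ L) (hi : i₀ + L + 1 ≤ K) {h : ZMod d} (hh : h ≠ 0) :
    ∃ p ≤ L + 1, (d : ℤ) ≤
      2 * (g + 1) ^ 2 * |(h * (wt g K (i₀ + p) : ZMod d)).valMinAbs| := by
  by_contra! hcon
  set e : ℕ → ℤ := fun p => (h * (wt g K (i₀ + p) : ZMod d)).valMinAbs with he
  have hcast : ∀ p, ((e p : ℤ) : ZMod d) = h * (wt g K (i₀ + p) : ZMod d) :=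
    fun p => ZMod.coe_valMinAbs _
  have hg1 : (2 : ℤ) ≤ g := by exact_mod_cast hg
  have hdpos : (0 : ℤ) < d := by have := NeZero.pos d; exact_mod_cast this
  -- the congruence recurrence lifts to an exact one, all terms being small
  have hrec : ∀ p, p + 2 ≤ L + 1 → (g : ℤ) * e (p + 2) + g * e p = (g ^ 2 + 1) * e (p + 1) := by
    intro p hp
    have hdvd : (d : ℤ) ∣ g * e (p + 2) + g * e p - (g ^ 2 + 1) * e (p + 1) := by
      rw [← ZMod.intCast_zmod_eq_zero_iff_dvd]
      push_cast
      rw [hcast, hcast, hcast]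
      have hw := congrArg (Nat.cast : ℕ → ZMod d) (wt_rec (g := g) (K := K) (i := i₀ + p) (by omega))
      push_cast at hw
      simp only [← add_assoc]
      linear_combination h * hw
    have habs : |(g : ℤ) * e (p + 2) + g * e p - (g ^ 2 + 1) * e (p + 1)| < (d : ℤ) := by
      have a := abs_le.1 (le_refl |e p|)
      have b := abs_le.1 (le_refl |e (p + 1)|)
      have c := abs_le.1 (le_refl |e (p + 2)|)
      have a' := hcon p (by omega)
      have b' := hcon (p + 1) (by omega)
      have c' := hcon (p + 2) (by omega)
      change 2 * ((g : ℤ) + 1) ^ 2 * |e p| < d at a'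
      change 2 * ((g : ℤ) + 1) ^ 2 * |e (p + 1)| < d at b'
      change 2 * ((g : ℤ) + 1) ^ 2 * |e (p + 2)| < d at c'
      set m := max (max |e p| |e (p + 1)|) |e (p + 2)| with hm
      have hma : |e p| ≤ m := (le_max_left _ _).trans (le_max_left _ _)
      have hmb : |e (p + 1)| ≤ m := (le_max_right _ _).trans (le_max_left _ _)
      have hmc : |e (p + 2)| ≤ m := le_max_right _ _
      have hm0 : 0 ≤ m := (abs_nonneg _).trans hma
      have hmd : 2 * ((g : ℤ) + 1) ^ 2 * m < d := by
        rw [hm]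
        rcases max_choice (max |e p| |e (p + 1)|) |e (p + 2)| with h1 | h1 <;> rw [h1]
        · rcases max_choice |e p| |e (p + 1)| with h2 | h2 <;> rw [h2] <;> assumption
        · assumption
      have t1 : |(g : ℤ) * e (p + 2) + g * e p - (g ^ 2 + 1) * e (p + 1)| ≤
          g * |e (p + 2)| + g * |e p| + (g ^ 2 + 1) * |e (p + 1)| := by
        refine (abs_sub _ _).trans ?_
        refine (add_le_add_left (abs_add_le _ _) _).trans (le_of_eq ?_)
        rw [abs_mul, abs_mul, abs_mul, abs_of_pos (by positivity : (0 : ℤ) < (g : ℤ) ^ 2 + 1),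
          abs_of_pos (by linarith : (0 : ℤ) < g)]
      have t2 : g * |e (p + 2)| + g * |e p| + ((g : ℤ) ^ 2 + 1) * |e (p + 1)| ≤
          g * m + g * m + (g ^ 2 + 1) * m := by gcongr
      have t3 : (g : ℤ) * m + g * m + (g ^ 2 + 1) * m = (g + 1) ^ 2 * m := by ring
      have t4 := mul_nonneg (sq_nonneg ((g : ℤ) + 1)) hm0
      linarith
    have := Int.eq_zero_of_abs_lt_dvd hdvd habs
    linarith
  have hsmall : ∀ p, p ≤ L + 1 → (2 * ((g : ℤ) + 1)) * |e p| < d := by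
    intro p hp
    have a' := hcon p hp
    change 2 * ((g : ℤ) + 1) ^ 2 * |e p| < d at a'
    have : 2 * ((g : ℤ) + 1) * |e p| ≤ 2 * (g + 1) ^ 2 * |e p| := by
      gcongr
      nlinarith
    linarith
  have hu : ∀ p, p ≤ L → (g : ℤ) * e (p + 1) - e p = g ^ p * (g * e 1 - e 0) := by
    intro p
    induction p with
    | zero => intro _; simp
    | succ p ih =>
      intro hp
      have h1 := ih (by omega)
      have h2 := hrec p (by omega)
      rw [pow_succ]
      linear_combination h2 + (g : ℤ) * h1
  have hv : ∀ p, p ≤ L → e 1 - g * e 0 = (g : ℤ) ^ p * (e (p + 1) - g * e p) := by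
    intro p
    induction p with
    | zero => intro _; simp
    | succ p ih =>
      intro hp
      have h1 := ih (by omega)
      have h2 := hrec p (by omega)
      rw [pow_succ]
      linear_combination h1 - (g : ℤ) ^ p * h2
  have hgL : (d : ℤ) ≤ (g : ℤ) ^ L := by exact_mod_cast hd
  have bound : ∀ x y : ℤ, (2 * ((g : ℤ) + 1)) * |x| < d → (2 * ((g : ℤ) + 1)) * |y| < d →
      |(g : ℤ) * x - y| < d ∧ |x - (g : ℤ) * y| < d := by
    intro x y hx hy
    have ax := abs_le.1 (le_refl |x|)
    have ay := abs_le.1 (le_refl |y|)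
    constructor <;> rw [abs_lt] <;> constructor <;>
      nlinarith [abs_nonneg x, abs_nonneg y]
  have hu0 : (g : ℤ) * e 1 - e 0 = 0 := by
    by_contra hne
    have h1 := (bound _ _ (hsmall (L + 1) le_rfl) (hsmall L (by omega))).1
    rw [hu L le_rfl, abs_mul, abs_of_pos (by positivity : (0 : ℤ) < (g : ℤ) ^ L)] at h1
    have := Int.one_le_abs hne
    nlinarith
  have hv0 : e 1 - (g : ℤ) * e 0 = 0 := by
    by_contra hne
    have h1 := (bound _ _ (hsmall 1 (by omega)) (hsmall 0 (by omega))).2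
    have hne' : e (L + 1) - g * e L ≠ 0 := by
      intro h0
      rw [hv L le_rfl, h0] at hne
      simp at hne
    rw [hv L le_rfl, abs_mul, abs_of_pos (by positivity : (0 : ℤ) < (g : ℤ) ^ L)] at h1
    have := Int.one_le_abs hne'
    nlinarith
  have he0 : e 0 = 0 := by
    have h1 : ((g : ℤ) ^ 2 - 1) * e 0 = 0 := by linear_combination hu0 - g * hv0
    rcases mul_eq_zero.1 h1 with h2 | h2
    · nlinarith
    · exact h2
  have he1 : e 1 = 0 := by rw [he0] at hv0; linarith
  apply hh
  apply eq_zero_of_wt (K := K) (i := i₀) (by omega) hcop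
  · have := hcast 0; rw [he0] at this; simpa using this.symm
  · have := hcast 1; rw [he1] at this; simpa using this.symm

/-- The saving factor for a digit whose frequency is at distance at least `1 / (2 (g+1)^2)` from
the integers: two of the `g` unit vectors in the digit sum differ by an angle of at least
`π / (g+1)^2`. -/
noncomputable def qfac (g : ℕ) : ℝ :=
  ((g : ℝ) - 2 + Real.sqrt (2 + 2 * Real.cos (Real.pi / (g + 1) ^ 2))) / g

lemma qfac_nonneg {g : ℕ} (hg : 2 ≤ g) : 0 ≤ qfac g := by
  have : (2 : ℝ) ≤ g := by exact_mod_cast hg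
  have h := Real.sqrt_nonneg (2 + 2 * Real.cos (Real.pi / (g + 1) ^ 2))
  unfold qfac
  apply div_nonneg <;> linarith

lemma qfac_lt_one {g : ℕ} (hg : 2 ≤ g) : qfac g < 1 := by
  have h2 : (2 : ℝ) ≤ g := by exact_mod_cast hg
  unfold qfac
  rw [div_lt_one (by linarith)]
  have hx : 0 < Real.pi / ((g : ℝ) + 1) ^ 2 := by positivity
  have hx2 : Real.pi / ((g : ℝ) + 1) ^ 2 ≤ Real.pi := div_le_self Real.pi_pos.le (by nlinarith)
  have hcos : Real.cos (Real.pi / (g + 1) ^ 2) < 1 := by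
    exact (Real.cos_lt_cos_of_nonneg_of_le_pi le_rfl hx2 hx).trans_eq Real.cos_zero
  have : Real.sqrt (2 + 2 * Real.cos (Real.pi / (g + 1) ^ 2)) < 2 := by
    rw [Real.sqrt_lt' (by norm_num)]
    linarith
  linarith

lemma norm_one_add_stdAddChar_le {g d : ℕ} [NeZero d] (x : ZMod d)
    (hx : (d : ℤ) ≤ 2 * (g + 1) ^ 2 * |x.valMinAbs|) :
    ‖1 + ZMod.stdAddChar x‖ ≤ Real.sqrt (2 + 2 * Real.cos (Real.pi / (g + 1) ^ 2)) := by
  have hd : (0 : ℝ) < d := by have := NeZero.pos d; exact_mod_cast this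
  set e := x.valMinAbs with he
  set θ : ℝ := 2 * Real.pi * e / d with hθ
  have h1 : ZMod.stdAddChar x = Complex.exp (θ * Complex.I) := by
    conv_lhs => rw [← ZMod.coe_valMinAbs x, ZMod.stdAddChar_coe]
    congr 1
    rw [hθ]; push_cast; ring
  have h2 : ‖1 + ZMod.stdAddChar x‖ ^ 2 = 2 + 2 * Real.cos θ := by
    rw [h1, Complex.sq_norm, Complex.normSq_apply]
    simp only [Complex.add_re, Complex.one_re, Complex.add_im, Complex.one_im,
      Complex.exp_ofReal_mul_I_re, Complex.exp_ofReal_mul_I_im]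
    nlinarith [Real.sin_sq_add_cos_sq θ]
  have hle : (2 * |e| : ℤ) ≤ d := by
    have := ZMod.natAbs_valMinAbs_le x
    rw [← he] at this
    rw [Int.abs_eq_natAbs]
    omega
  have hle' : 2 * |(e : ℝ)| ≤ d := by
    have : ((2 * |e| : ℤ) : ℝ) ≤ ((d : ℤ) : ℝ) := by exact_mod_cast hle
    push_cast at this
    exact this
  have hx' : (d : ℝ) ≤ 2 * ((g : ℝ) + 1) ^ 2 * |(e : ℝ)| := by
    have : ((d : ℤ) : ℝ) ≤ ((2 * (g + 1) ^ 2 * |e| : ℤ) : ℝ) := by exact_mod_cast hx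
    push_cast at this
    exact this
  have habs : |θ| = 2 * Real.pi * |(e : ℝ)| / d := by
    rw [hθ, abs_div, abs_mul, abs_of_pos hd, abs_of_pos (by positivity : 0 < 2 * Real.pi)]
  have h3 : Real.cos θ ≤ Real.cos (Real.pi / (g + 1) ^ 2) := by
    rw [← Real.cos_abs θ]
    refine Real.cos_le_cos_of_nonneg_of_le_pi (by positivity) ?_ ?_
    · rw [habs, div_le_iff₀ hd]
      nlinarith [Real.pi_pos]
    · rw [habs, div_le_div_iff₀ (by positivity) hd]
      nlinarith [Real.pi_pos]
  refine Real.le_sqrt_of_sq_le ?_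
  rw [h2]
  linarith

lemma norm_digit_sum_le_one {g d : ℕ} [NeZero d] (x : ZMod d) :
    ‖∑ n : Fin g, ZMod.stdAddChar (((n : ℕ) : ZMod d) * x)‖ ≤ g := by
  refine (norm_sum_le _ _).trans ?_
  simp [AddChar.norm_apply]

lemma norm_digit_sum_le {g d : ℕ} (hg : 2 ≤ g) [NeZero d] (x : ZMod d)
    (hx : (d : ℤ) ≤ 2 * (g + 1) ^ 2 * |x.valMinAbs|) :
    ‖∑ n : Fin g, ZMod.stdAddChar (((n : ℕ) : ZMod d) * x)‖ ≤ g * qfac g := by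
  have hg0 : (g : ℝ) ≠ 0 := by positivity
  obtain ⟨k, rfl⟩ : ∃ k, g = k + 2 := ⟨g - 2, by omega⟩
  rw [Fin.sum_univ_eq_sum_range (fun n => ZMod.stdAddChar ((n : ZMod d) * x)), add_comm k 2,
    sum_range_add]
  refine (norm_add_le _ _).trans ?_
  rw [sum_range_succ, sum_range_one]
  simp only [Nat.cast_zero, zero_mul, AddChar.map_zero_eq_one, Nat.cast_one, one_mul]
  have h1 := norm_one_add_stdAddChar_le x hx
  have h2 : ‖∑ n ∈ range k, ZMod.stdAddChar (((2 + n : ℕ) : ZMod d) * x)‖ ≤ k := by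
    refine (norm_sum_le _ _).trans ?_
    simp [AddChar.norm_apply]
  rw [add_comm 2 k, qfac, mul_div_cancel₀ _ hg0]
  have h3 : ((k + 2 : ℕ) : ℝ) - 2 = k := by push_cast; ring
  rw [h3]
  linarith

/-- A product of numbers in `[0, 1]`, with a factor at most `q` in each window of length `W`, gains
a factor `q` for every disjoint window. -/
lemma prod_window_le {a : ℕ → ℝ} {q : ℝ} {W K : ℕ} (hq : 0 ≤ q) (h0 : ∀ i, 0 ≤ a i)
    (h1 : ∀ i, a i ≤ 1) (hw : ∀ i, i + W ≤ K → ∃ p < W, a (i + p) ≤ q) (M : ℕ) (hM : M * W ≤ K) :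
    ∏ i ∈ range (M * W), a i ≤ q ^ M := by
  induction M with
  | zero => simp
  | succ M ih =>
    rw [add_mul, one_mul] at hM
    rw [add_mul, one_mul, prod_range_add, pow_succ]
    refine mul_le_mul (ih (by omega)) ?_ (prod_nonneg fun _ _ => h0 _) (by positivity)
    obtain ⟨p, hp, hpq⟩ := hw (M * W) hM
    rw [← mul_prod_erase _ _ (mem_range.2 hp)]
    calc _ ≤ q * 1 := mul_le_mul hpq (prod_le_one (fun _ _ => h0 _) fun _ _ => h1 _)
          (prod_nonneg fun _ _ => h0 _) hq
      _ = q := mul_one q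

lemma addChar_map_sum {A ι : Type*} [AddCommMonoid A] (ψ : AddChar A ℂ) (s : Finset ι) (f : ι → A) :
    ψ (∑ i ∈ s, f i) = ∏ i ∈ s, ψ (f i) := by
  classical
  induction s using Finset.induction_on with
  | empty => simp
  | insert i s hi ih => rw [sum_insert hi, prod_insert hi, AddChar.map_add_eq_mul, ih]

/-- The exponential sum over digit vectors factors over the digits, and each window of `L + 2`
digits gains a factor `qfac g`. -/
lemma norm_char_sum_le {g K d L M t : ℕ} (hg : 2 ≤ g) [NeZero d] (hcop : d.Coprime (2 * g))
    (hd : d ≤ g ^ L) (hM : M * (L + 2) ≤ K) {h : ZMod d} (hh : h ≠ 0) :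
    ‖∑ c : Fin K → Fin g, ZMod.stdAddChar (h * ((t + dval (wt g K) c : ℕ) : ZMod d))‖ ≤
      (g : ℝ) ^ K * qfac g ^ M := by
  have hg0 : (0 : ℝ) < g := by positivity
  let b : ℕ → ℂ := fun i => ∑ n : Fin g,
    ZMod.stdAddChar (((n : ℕ) : ZMod d) * (h * (wt g K i : ZMod d)))
  have h1 : ∑ c : Fin K → Fin g, ZMod.stdAddChar (h * ((t + dval (wt g K) c : ℕ) : ZMod d)) =
      ZMod.stdAddChar (h * (t : ZMod d)) * ∏ i : Fin K, b i := by
    rw [Fintype.prod_sum, mul_sum]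
    refine sum_congr rfl fun c _ => ?_
    rw [← addChar_map_sum, ← AddChar.map_add_eq_mul]
    congr 1
    simp only [dval]
    push_cast
    rw [mul_add, mul_sum]
    congr 1
    exact sum_congr rfl fun i _ => by ring
  rw [h1, norm_mul, AddChar.norm_apply, one_mul, Fin.prod_univ_eq_prod_range b, norm_prod]
  have hb1 : ∀ i, ‖b i‖ / g ≤ 1 := fun i => by
    rw [div_le_one hg0]; exact norm_digit_sum_le_one _
  have h2 := prod_window_le (a := fun i => ‖b i‖ / g) (q := qfac g) (W := L + 2) (K := K)
    (qfac_nonneg hg) (fun i => by positivity) hb1 (by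
      intro i hi
      obtain ⟨p, hp, hpe⟩ := exists_large_in_window (K := K) (i₀ := i) hg hcop hd (by omega) hh
      refine ⟨p, by omega, ?_⟩
      rw [div_le_iff₀ hg0, mul_comm]
      exact norm_digit_sum_le hg _ hpe) M hM
  have h3 : ∏ i ∈ range K, (‖b i‖ / g) ≤ qfac g ^ M := by
    obtain ⟨r, hr⟩ : ∃ r, K = M * (L + 2) + r := ⟨K - M * (L + 2), by omega⟩
    conv_lhs => rw [hr, prod_range_add]
    calc _ ≤ qfac g ^ M * 1 := mul_le_mul h2
          (prod_le_one (fun _ _ => by positivity) fun _ _ => hb1 _)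
          (prod_nonneg fun _ _ => by positivity) (pow_nonneg (qfac_nonneg hg) _)
      _ = _ := mul_one _
  rw [prod_div_distrib, prod_const, card_range, div_le_iff₀ (by positivity)] at h3
  linarith

/-- Equidistribution of palindromes modulo `d ≤ g^L`, by orthogonality of additive characters. -/
lemma cnt_equidistribution {g K d L M t : ℕ} (hg : 2 ≤ g) (hd0 : 0 < d) (hcop : d.Coprime (2 * g))
    (hd : d ≤ g ^ L) (hM : M * (L + 2) ≤ K) :
    |(cnt g K d t : ℝ) - (g : ℝ) ^ K / d| ≤ (g : ℝ) ^ K * qfac g ^ M := by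
  have : NeZero d := ⟨hd0.ne'⟩
  have hdR : (0 : ℝ) < d := by exact_mod_cast hd0
  let S : ZMod d → ℂ := fun h =>
    ∑ c : Fin K → Fin g, ZMod.stdAddChar (h * ((t + dval (wt g K) c : ℕ) : ZMod d))
  have h1 : (d : ℂ) * (cnt g K d t : ℂ) = ∑ h, S h := by
    simp only [S]
    rw [sum_comm, cnt_eq_sum, Nat.cast_sum, mul_sum]
    refine sum_congr rfl fun c _ => ?_
    rw [AddChar.sum_mulShift _ (ZMod.isPrimitive_stdAddChar d), ZMod.card]
    simp only [ZMod.natCast_eq_zero_iff]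
    split_ifs <;> simp
  have h0 : S 0 = (g : ℂ) ^ K := by simp [S]
  rw [← add_sum_erase _ _ (mem_univ (0 : ZMod d)), h0] at h1
  have h2 : ‖(d : ℂ) * (cnt g K d t : ℂ) - (g : ℂ) ^ K‖ ≤ d * ((g : ℝ) ^ K * qfac g ^ M) := by
    rw [h1, add_sub_cancel_left]
    refine (norm_sum_le _ _).trans ?_
    calc _ ≤ ∑ h ∈ univ.erase (0 : ZMod d), (g : ℝ) ^ K * qfac g ^ M :=
          sum_le_sum fun h hh => norm_char_sum_le hg hcop hd hM (ne_of_mem_erase hh)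
      _ ≤ _ := by
          rw [sum_const, nsmul_eq_mul]
          have := qfac_nonneg hg
          gcongr
          refine (card_erase_le).trans ?_
          simp [ZMod.card]
  have h3 : (d : ℂ) * (cnt g K d t : ℂ) - (g : ℂ) ^ K =
      ((d * (cnt g K d t : ℝ) - (g : ℝ) ^ K : ℝ) : ℂ) := by push_cast; ring
  rw [h3, Complex.norm_real, Real.norm_eq_abs] at h2
  have h4 : (cnt g K d t : ℝ) - (g : ℝ) ^ K / d = (d * (cnt g K d t : ℝ) - (g : ℝ) ^ K) / d := by
    field_simp
  rw [h4, abs_div, abs_of_pos hdR, div_le_iff₀ hdR]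
  linarith

/-! ### Coprime pairs with prescribed outer and central digits -/

open ArithmeticFunction in
/-- Möbius inversion for the condition `gcd m n = 1`, restricted to moduli coprime to an integer
`Q` that is known to be coprime to the gcd. -/
lemma gcd_indicator_eq {m n Q Z : ℕ} (hm : 0 < m) (hmZ : m ≤ Z) (h : (Nat.gcd m n).Coprime Q) :
    (if Nat.gcd m n = 1 then 1 else 0 : ℝ) =
      ∑ d ∈ Ioc 0 Z, if d.Coprime Q then
        (moebius d : ℝ) * (if d ∣ m then 1 else 0) * (if d ∣ n then 1 else 0) else 0 := by
  have h1 := congrArg (fun f : ArithmeticFunction ℤ => f (Nat.gcd m n)) moebius_mul_coe_zeta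
  simp only [coe_mul_zeta_apply, one_apply] at h1
  have h2 : (if Nat.gcd m n = 1 then 1 else 0 : ℝ) = ∑ d ∈ (Nat.gcd m n).divisors, (moebius d : ℝ) := by
    have := congrArg (Int.cast : ℤ → ℝ) h1
    push_cast at this
    exact this.symm
  rw [h2]
  have hsub : (Nat.gcd m n).divisors ⊆ Ioc 0 Z := by
    intro d hd
    rw [Nat.mem_divisors] at hd
    have hdm : d ∣ m := hd.1.trans (Nat.gcd_dvd_left m n)
    exact mem_Ioc.2 ⟨Nat.pos_of_dvd_of_pos hdm hm, (Nat.le_of_dvd hm hdm).trans hmZ⟩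
  rw [← sum_subset hsub]
  · refine sum_congr rfl fun d hd => ?_
    rw [Nat.mem_divisors] at hd
    rw [if_pos (Nat.Coprime.of_dvd_left hd.1 h), if_pos (hd.1.trans (Nat.gcd_dvd_left m n)),
      if_pos (hd.1.trans (Nat.gcd_dvd_right m n))]
    ring
  · intro d _ hd
    rw [Nat.mem_divisors, not_and_or, Nat.dvd_gcd_iff] at hd
    have : ¬ (d ∣ m ∧ d ∣ n) := by
      rcases hd with hd | hd
      · exact hd
      · exact absurd (Nat.gcd_pos_of_pos_left n hm).ne' hd
    split_ifs <;> simp_all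

/-- The summand `μ(d) / d^2`, restricted to `d` coprime to `Q`. -/
noncomputable def muTerm (Q d : ℕ) : ℝ :=
  if d.Coprime Q then (ArithmeticFunction.moebius d : ℝ) / (d : ℝ) ^ 2 else 0

/-- The sum of `μ(d) / d^2` over all `d` coprime to `Q`. -/
noncomputable def muSum (Q : ℕ) : ℝ := ∑' d, muTerm Q d

lemma abs_moebius_le (d : ℕ) : |(ArithmeticFunction.moebius d : ℝ)| ≤ 1 := by
  have := ArithmeticFunction.abs_moebius_le_one (n := d)
  exact_mod_cast this

lemma abs_muTerm_le (Q d : ℕ) : |muTerm Q d| ≤ ((d : ℝ) ^ 2)⁻¹ := by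
  unfold muTerm
  split_ifs
  · rw [abs_div, abs_of_nonneg (by positivity : (0 : ℝ) ≤ (d : ℝ) ^ 2), div_eq_mul_inv]
    exact mul_le_of_le_one_left (by positivity) (abs_moebius_le d)
  · rw [abs_zero]; positivity

lemma summable_muTerm (Q : ℕ) : Summable (muTerm Q) := by
  refine Summable.of_norm_bounded (g := fun d : ℕ => ((d : ℝ) ^ 2)⁻¹) ?_ (fun d => ?_)
  · exact Real.summable_nat_pow_inv.2 (by norm_num)
  · rw [Real.norm_eq_abs]; exact abs_muTerm_le Q d

lemma muTerm_zero {Q : ℕ} : muTerm Q 0 = 0 := by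
  unfold muTerm; simp

lemma abs_muSum_sub_le {Q D : ℕ} (hD : 0 < D) :
    |muSum Q - ∑ d ∈ Ioc 0 D, muTerm Q d| ≤ (D : ℝ)⁻¹ := by
  have ht := (summable_muTerm Q).hasSum.tendsto_sum_nat
  have ht2 := ((ht.comp (Filter.tendsto_add_atTop_nat 1)).sub_const
    (∑ d ∈ Ioc 0 D, muTerm Q d)).abs
  refine le_of_tendsto ht2 ?_
  filter_upwards [Filter.eventually_ge_atTop D] with n hn
  have e : ∑ d ∈ range (n + 1), muTerm Q d = ∑ d ∈ Ioc 0 n, muTerm Q d := by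
    refine (sum_subset (fun d hd => ?_) fun d hd hd2 => ?_).symm
    · rw [mem_Ioc] at hd; exact mem_range.2 (by omega)
    · rw [mem_range] at hd
      rw [mem_Ioc] at hd2
      rw [show d = 0 by omega, muTerm_zero]
  simp only [Function.comp]
  rw [e, ← sum_Ioc_consecutive _ (Nat.zero_le D) hn, add_sub_cancel_left]
  calc _ ≤ ∑ d ∈ Ioc D n, |muTerm Q d| := abs_sum_le_sum_abs _ _
    _ ≤ ∑ d ∈ Ioc D n, ((d : ℝ) ^ 2)⁻¹ := sum_le_sum fun d _ => abs_muTerm_le Q d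
    _ ≤ (D : ℝ)⁻¹ - (n : ℝ)⁻¹ := sum_Ioc_inv_sq_le_sub hD.ne' hn
    _ ≤ _ := by have : (0 : ℝ) ≤ (n : ℝ)⁻¹ := by positivity
                linarith

lemma cnt_le_pow (g K d t : ℕ) : (cnt g K d t : ℝ) ≤ (g : ℝ) ^ K := by
  have : cnt g K d t ≤ g ^ K := by
    refine (card_filter_le _ _).trans ?_
    simp
  exact_mod_cast this

/-- The number of pairs of digit vectors `c`, `c'` with `t + ∑ c_i w_i` and `t' + ∑ c'_i w_i`
coprime. -/
noncomputable def pairCount (g K t t' : ℕ) : ℝ :=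
  ∑ c : Fin K → Fin g, ∑ c' : Fin K → Fin g,
    if Nat.gcd (t + dval (wt g K) c) (t' + dval (wt g K) c') = 1 then 1 else 0

lemma pairCount_eq {g K t t' Q Z : ℕ} (ht : 0 < t)
    (hZ : ∀ c : Fin K → Fin g, t + dval (wt g K) c ≤ Z)
    (h : ∀ c c' : Fin K → Fin g,
      (Nat.gcd (t + dval (wt g K) c) (t' + dval (wt g K) c')).Coprime Q) :
    pairCount g K t t' = ∑ d ∈ Ioc 0 Z, if d.Coprime Q then
      (ArithmeticFunction.moebius d : ℝ) * cnt g K d t * cnt g K d t' else 0 := by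
  unfold pairCount
  have h1 : ∀ c c' : Fin K → Fin g, _ := fun c c' =>
    gcd_indicator_eq (Nat.add_pos_left ht _) (hZ c) (h c c')
  simp only [h1]
  simp only [sum_comm (t := Ioc 0 Z)]
  refine sum_congr rfl fun d _ => ?_
  split_ifs with hd
  · simp only [cnt_eq_sum, Nat.cast_sum, Nat.cast_ite, Nat.cast_one, Nat.cast_zero]
    rw [mul_assoc, sum_mul_sum, mul_sum]
    simp only [mul_sum, mul_assoc]
  · simp

/-- The number of coprime pairs with prescribed outer and central digits, when these digits rule out
a common factor with `2 * g`. Moduli up to `g^(2l+2)` are handled by equidistribution and larger ones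
by the second moment bound; `T` is chosen with `(qfac g)^T < g^(-3)`, which beats the number of
small moduli. -/
lemma exists_pair_bound {g : ℕ} (hg : 2 ≤ g) : ∃ (C : ℝ) (T : ℕ), 0 < C ∧ 0 < T ∧
    ∀ K l t t' : ℕ, 0 < t → 0 < t' →
    (∀ c : Fin K → Fin g, t + dval (wt g K) c ≤ g ^ (2 * K + 3)) →
    (∀ c : Fin K → Fin g, t' + dval (wt g K) c ≤ g ^ (2 * K + 3)) →
    (∀ c c' : Fin K → Fin g,
      (Nat.gcd (t + dval (wt g K) c) (t' + dval (wt g K) c')).Coprime (2 * g)) →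
    4 * T * (l + 1) ^ 2 ≤ K →
    |pairCount g K t t' - ((g : ℝ) ^ K) ^ 2 * muSum (2 * g)| ≤
      C * ((g : ℝ) ^ K) ^ 2 * ((Real.sqrt g)⁻¹) ^ l := by
  obtain ⟨C, hC, htail⟩ := exists_tail_bound hg
  have hg2 : (2 : ℝ) ≤ g := by exact_mod_cast hg
  obtain ⟨T, hT⟩ := exists_pow_lt_of_lt_one (show (0 : ℝ) < ((g : ℝ)⁻¹) ^ 3 by positivity)
    (qfac_lt_one hg)
  have hq0 := qfac_nonneg hg
  have hT0 : 0 < T := by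
    rcases Nat.eq_zero_or_pos T with rfl | h
    · have : ((g : ℝ)⁻¹) ^ 3 ≤ 1 := pow_le_one₀ (by positivity) (inv_le_one_of_one_le₀ (by linarith))
      rw [pow_zero] at hT
      linarith
    · exact h
  refine ⟨3 + C, T, by positivity, hT0, ?_⟩
  intro K l t t' ht ht' hZ hZ' hgood hK
  set G : ℝ := (g : ℝ) ^ K with hG
  have hG0 : 0 < G := by positivity
  set b := Real.sqrt g with hb
  have hb2 : b ^ 2 = g := Real.sq_sqrt (by positivity)
  have hb1 : 1 ≤ b := Real.one_le_sqrt.2 (by linarith)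
  have hbi0 : 0 ≤ b⁻¹ := by positivity
  have hbi1 : b⁻¹ ≤ 1 := inv_le_one_of_one_le₀ hb1
  have hlT : l + 1 ≤ T * (l + 1) ^ 2 := by nlinarith [Nat.mul_le_mul hT0 (le_refl ((l + 1) ^ 2))]
  have hlK : 3 * l + 1 ≤ K := by linarith [hlT, hK]
  have hMK : (T * (l + 1)) * (2 * l + 2 + 2) ≤ K := by
    refine le_trans ?_ hK
    calc _ ≤ T * (l + 1) * (4 * (l + 1)) := Nat.mul_le_mul_left _ (by omega)
      _ = _ := by ring
  set D := g ^ (2 * l + 2) with hD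
  have hD0 : 0 < D := by positivity
  set Z := g ^ (2 * K + 3) with hZd
  have hDZ : D ≤ Z := Nat.pow_le_pow_right (by omega) (by omega)
  rw [pairCount_eq ht hZ hgood, ← sum_Ioc_consecutive _ (Nat.zero_le D) hDZ]
  set h : ℕ → ℝ := fun d => if d.Coprime (2 * g) then
      (ArithmeticFunction.moebius d : ℝ) * cnt g K d t * cnt g K d t' else 0 with hh
  -- moduli at most `D`
  have s1 : |∑ d ∈ Ioc 0 D, h d - G ^ 2 * ∑ d ∈ Ioc 0 D, muTerm (2 * g) d| ≤
      D * (2 * G ^ 2 * qfac g ^ (T * (l + 1))) := by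
    rw [mul_sum, ← sum_sub_distrib]
    refine (abs_sum_le_sum_abs _ _).trans ?_
    have : ∀ d ∈ Ioc 0 D, |h d - G ^ 2 * muTerm (2 * g) d| ≤
        2 * G ^ 2 * qfac g ^ (T * (l + 1)) := by
      intro d hd
      rw [mem_Ioc] at hd
      by_cases hc : d.Coprime (2 * g)
      · simp only [hh, muTerm, if_pos hc]
        have e1 := cnt_equidistribution (t := t) hg hd.1 hc hd.2 hMK
        have e2 := cnt_equidistribution (t := t') hg hd.1 hc hd.2 hMK
        have d1 : (1 : ℝ) ≤ d := by exact_mod_cast hd.1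
        have e3 : G / d ≤ G := div_le_self hG0.le d1
        have e4 := cnt_le_pow g K d t'
        have e5 : (0 : ℝ) ≤ cnt g K d t' := by positivity
        rw [← hG] at e1 e2 e4
        set S : ℝ := (cnt g K d t : ℝ)
        set S' : ℝ := (cnt g K d t' : ℝ)
        have e6 : (ArithmeticFunction.moebius d : ℝ) * S * S' -
            G ^ 2 * ((ArithmeticFunction.moebius d : ℝ) / (d : ℝ) ^ 2) =
            (ArithmeticFunction.moebius d : ℝ) * ((S - G / d) * S' + G / d * (S' - G / d)) := by
          field_simp
          ring
        rw [e6, abs_mul]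
        refine (mul_le_of_le_one_left (abs_nonneg _) (abs_moebius_le d)).trans ?_
        refine (abs_add_le _ _).trans ?_
        rw [abs_mul, abs_mul, abs_of_nonneg e5, abs_of_nonneg (by positivity : 0 ≤ G / d)]
        calc _ ≤ (G * qfac g ^ (T * (l + 1))) * G + G * (G * qfac g ^ (T * (l + 1))) := by gcongr
          _ = _ := by ring
      · simp only [hh, muTerm, if_neg hc]
        rw [mul_zero, sub_zero, abs_zero]
        positivity
    refine (sum_le_sum this).trans ?_
    rw [sum_const, nsmul_eq_mul, Nat.card_Ioc, Nat.sub_zero]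
  -- moduli above `D`
  have s2 : |∑ d ∈ Ioc D Z, h d| ≤ C * G ^ 2 * b⁻¹ ^ l := by
    have h1 := htail K t Z l ht hZ hlK
    have h2 := htail K t' Z l ht' hZ' hlK
    rw [← hG, ← hD] at h1 h2
    calc |∑ d ∈ Ioc D Z, h d| ≤ ∑ d ∈ Ioc D Z, |h d| := abs_sum_le_sum_abs _ _
      _ ≤ ∑ d ∈ Ioc D Z, if Squarefree d ∧ d.Coprime g then
            ((cnt g K d t : ℝ) ^ 2 + (cnt g K d t' : ℝ) ^ 2) / 2 else 0 := by
          refine sum_le_sum fun d _ => ?_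
          split_ifs with hd
          · simp only [hh]
            split_ifs
            · rw [mul_assoc, abs_mul]
              refine (mul_le_of_le_one_left (abs_nonneg _) (abs_moebius_le d)).trans ?_
              rw [abs_of_nonneg (by positivity)]
              nlinarith [sq_nonneg ((cnt g K d t : ℝ) - cnt g K d t')]
            · rw [abs_zero]; positivity
          · refine le_of_eq ?_
            rw [abs_eq_zero]
            simp only [hh]
            split_ifs with hc
            · have : ¬ Squarefree d := fun hs => hd ⟨hs, Nat.Coprime.coprime_mul_left_right hc⟩
              rw [ArithmeticFunction.moebius_eq_zero_of_not_squarefree this]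
              simp
            · rfl
      _ = (∑ d ∈ moduli g D Z, (cnt g K d t : ℝ) ^ 2 +
            ∑ d ∈ moduli g D Z, (cnt g K d t' : ℝ) ^ 2) / 2 := by
          rw [← sum_filter, ← sum_add_distrib, sum_div]
          rfl
      _ ≤ _ := by linarith
  have s3 := abs_muSum_sub_le (Q := 2 * g) hD0
  have hgi : (g : ℝ)⁻¹ = b⁻¹ ^ 2 := by rw [inv_pow, hb2]
  have hDr : (D : ℝ) = (g : ℝ) ^ (2 * l + 2) := by rw [hD]; push_cast; rfl
  have s4 : (D : ℝ)⁻¹ ≤ b⁻¹ ^ l := by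
    rw [hDr, ← inv_pow, hgi, ← pow_mul]
    exact pow_le_pow_of_le_one hbi0 hbi1 (by omega)
  have s5 : (D : ℝ) * qfac g ^ (T * (l + 1)) ≤ b⁻¹ ^ l := by
    rw [pow_mul]
    calc (D : ℝ) * (qfac g ^ T) ^ (l + 1) ≤ D * (((g : ℝ)⁻¹) ^ 3) ^ (l + 1) := by gcongr
      _ = (g : ℝ)⁻¹ ^ (l + 1) := by
          rw [hDr, show 2 * l + 2 = 2 * (l + 1) by ring, pow_mul, ← mul_pow]
          congr 1
          field_simp
      _ ≤ _ := by
          rw [hgi, ← pow_mul]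
          exact pow_le_pow_of_le_one hbi0 hbi1 (by omega)
  set F := muSum (2 * g)
  set F' := ∑ d ∈ Ioc 0 D, muTerm (2 * g) d
  have e : ∑ d ∈ Ioc 0 D, h d + ∑ d ∈ Ioc D Z, h d - G ^ 2 * F =
      (∑ d ∈ Ioc 0 D, h d - G ^ 2 * F') + ∑ d ∈ Ioc D Z, h d + -(G ^ 2 * (F - F')) := by ring
  rw [e]
  refine (abs_add_three _ _ _).trans ?_
  rw [abs_neg, abs_mul, abs_of_pos (by positivity : 0 < G ^ 2)]
  have s6 : G ^ 2 * |F - F'| ≤ G ^ 2 * b⁻¹ ^ l := by gcongr; exact s3.trans s4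
  have s7 : D * (2 * G ^ 2 * qfac g ^ (T * (l + 1))) ≤ 2 * G ^ 2 * b⁻¹ ^ l := by
    calc _ = 2 * G ^ 2 * (D * qfac g ^ (T * (l + 1))) := by ring
      _ ≤ _ := by gcongr
  nlinarith

/-! ### The constant in the main term -/

/-- An infinite product over the primes whose factors outside a finite set `s` are `1` equals the
product over `s`. -/
lemma eq_prod_of_hasProd_primes {f : ℕ → ℝ} {a : ℝ} {s : Finset ℕ} (hs : ∀ p ∈ s, p.Prime)
    (h : HasProd (fun p : Nat.Primes => f p) a) (h1 : ∀ p : ℕ, p.Prime → p ∉ s → f p = 1) :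
    a = ∏ p ∈ s, f p := by
  have h2 : HasProd (Set.mulIndicator {p | Nat.Prime p} f) a :=
    (hasProd_subtype_iff_mulIndicator (f := f) (s := {p | Nat.Prime p})).1 h
  have h3 : HasProd (Set.mulIndicator {p | Nat.Prime p} f)
      (∏ p ∈ s, Set.mulIndicator {p | Nat.Prime p} f p) := by
    refine hasProd_prod_of_ne_finset_one fun p hp => ?_
    by_cases hpp : p.Prime
    · rw [Set.mulIndicator_of_mem (by exact hpp)]; exact h1 p hpp hp
    · exact Set.mulIndicator_of_notMem (by exact hpp) f
  rw [h2.unique h3]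
  exact prod_congr rfl fun p hp => Set.mulIndicator_of_mem (by exact hs p hp) f

open ArithmeticFunction in
/-- Euler product of `∑ μ(n) / n^2` over the `n` satisfying a condition that is multiplicative on
coprime arguments. It is used for `n` coprime to `Q` and for `n` dividing `g`. -/
lemma hasProd_moebius (χ : ℕ → Prop) [DecidablePred χ] (hχ1 : χ 1)
    (hχ : ∀ m n : ℕ, m.Coprime n → (χ (m * n) ↔ χ m ∧ χ n)) :
    HasProd (fun p : Nat.Primes => 1 - if χ p then (((p : ℕ) : ℝ) ^ 2)⁻¹ else 0)
      (∑' n : ℕ, if χ n then (moebius n : ℝ) / (n : ℝ) ^ 2 else 0) := by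
  set f : ℕ → ℝ := fun n => if χ n then (moebius n : ℝ) / (n : ℝ) ^ 2 else 0 with hf
  have hf1 : f 1 = 1 := by simp [hf, hχ1]
  have hf0 : f 0 = 0 := by simp [hf]
  have hmul : ∀ {m n : ℕ}, m.Coprime n → f (m * n) = f m * f n := by
    intro m n hmn
    simp only [hf, hχ m n hmn, isMultiplicative_moebius.map_mul_of_coprime hmn]
    by_cases h1 : χ m <;> by_cases h2 : χ n <;> simp [h1, h2]
    ring
  have hsum : Summable (fun n => ‖f n‖) := by
    refine Summable.of_nonneg_of_le (fun n => norm_nonneg _) (fun n => ?_)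
      (Real.summable_nat_pow_inv.2 (by norm_num : 1 < 2))
    simp only [hf]
    split_ifs
    · rw [norm_div, Real.norm_eq_abs, Real.norm_eq_abs,
        abs_of_nonneg (by positivity : (0 : ℝ) ≤ (n : ℝ) ^ 2), div_eq_mul_inv]
      exact mul_le_of_le_one_left (by positivity) (abs_moebius_le n)
    · rw [norm_zero]; positivity
  have h := EulerProduct.eulerProduct_hasProd hf1 hmul hsum hf0
  suffices e : (fun p : Nat.Primes => 1 - if χ p then (((p : ℕ) : ℝ) ^ 2)⁻¹ else 0) =
      fun p : Nat.Primes => ∑' e, f ((p : ℕ) ^ e) by rw [e]; exact h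
  funext p
  have hp := p.2
  rw [tsum_eq_sum (s := range 2), sum_range_succ, sum_range_one]
  · simp only [pow_zero, pow_one, hf1]
    simp only [hf, moebius_apply_prime hp]
    split_ifs
    · push_cast; ring
    · ring
  · intro e he
    rw [mem_range, not_lt] at he
    simp only [hf]
    rw [moebius_apply_prime_pow hp (by omega), if_neg (show e ≠ 1 by omega)]
    simp

lemma hasProd_zeta_two :
    HasProd (fun p : Nat.Primes => (1 - (((p : ℕ) : ℝ) ^ 2)⁻¹)⁻¹) (Real.pi ^ 2 / 6) := by
  let f : ℕ →*₀ ℝ :=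
    { toFun := fun n => ((n : ℝ) ^ 2)⁻¹
      map_zero' := by simp
      map_one' := by simp
      map_mul' := fun m n => by push_cast; rw [mul_pow, mul_inv] }
  have hz : HasSum (fun n : ℕ => f n) (Real.pi ^ 2 / 6) := by
    have := hasSum_zeta_two
    simp only [one_div] at this
    exact this
  have hs : Summable (fun n : ℕ => ‖f n‖) := hz.summable.norm
  have h := EulerProduct.eulerProduct_completely_multiplicative_hasProd hs
  rw [hz.tsum_eq] at h
  exact h

lemma one_sub_inv_sq_pos {p : ℕ} (hp : p.Prime) : 0 < 1 - ((p : ℝ) ^ 2)⁻¹ := by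
  have : (2 : ℝ) ≤ p := by exact_mod_cast hp.two_le
  rw [sub_pos]
  exact inv_lt_one_of_one_lt₀ (by nlinarith)

lemma muSum_eq {Q : ℕ} (hQ : Q ≠ 0) :
    muSum Q * (Real.pi ^ 2 / 6) = (∏ p ∈ Q.primeFactors, (1 - ((p : ℝ) ^ 2)⁻¹))⁻¹ := by
  have h1 := hasProd_moebius (fun n => n.Coprime Q) (Nat.coprime_one_left Q)
    (fun m n _ => Nat.coprime_mul_iff_left)
  have h2 := h1.mul hasProd_zeta_two
  rw [← prod_inv_distrib]
  refine (eq_prod_of_hasProd_primes (s := Q.primeFactors)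
    (f := fun p : ℕ => (1 - if p.Coprime Q then ((p : ℝ) ^ 2)⁻¹ else 0) *
    (1 - ((p : ℝ) ^ 2)⁻¹)⁻¹) (fun p hp => Nat.prime_of_mem_primeFactors hp) h2 ?_).trans ?_
  · intro p hp hpQ
    have : p.Coprime Q := (Nat.Prime.coprime_iff_not_dvd hp).2 fun hd =>
      hpQ (Nat.mem_primeFactors.2 ⟨hp, hd, hQ⟩)
    rw [if_pos this]
    exact mul_inv_cancel₀ (one_sub_inv_sq_pos hp).ne'
  · refine prod_congr rfl fun p hp => ?_
    have hp' := Nat.mem_primeFactors.1 hp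
    rw [if_neg (fun h => (Nat.Prime.coprime_iff_not_dvd hp'.1).1 h hp'.2.1)]
    simp

lemma sum_divisors_moebius {g : ℕ} (hg : g ≠ 0) :
    ∑ d ∈ g.divisors, (ArithmeticFunction.moebius d : ℝ) / (d : ℝ) ^ 2 =
      ∏ p ∈ g.primeFactors, (1 - ((p : ℝ) ^ 2)⁻¹) := by
  have h1 := hasProd_moebius (fun n => n ∣ g) (one_dvd g)
    (fun m n hmn => ⟨fun h => ⟨dvd_of_mul_right_dvd h, dvd_of_mul_left_dvd h⟩,
      fun h => hmn.mul_dvd_of_dvd_of_dvd h.1 h.2⟩)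
  rw [tsum_eq_sum (s := g.divisors)] at h1
  · have h2 := eq_prod_of_hasProd_primes (f := fun p : ℕ => 1 - if p ∣ g then ((p : ℝ) ^ 2)⁻¹ else 0)
      (s := g.primeFactors) (fun p hp => Nat.prime_of_mem_primeFactors hp) h1
      (fun p hp hpg => by
        rw [if_neg (fun hd => hpg (Nat.mem_primeFactors.2 ⟨hp, hd, hg⟩)), sub_zero])
    refine Eq.trans (sum_congr rfl fun d hd => ?_) (h2.trans (prod_congr rfl fun p hp => ?_))
    · rw [if_pos (Nat.dvd_of_mem_divisors hd)]
    · rw [if_pos (Nat.dvd_of_mem_primeFactors hp)]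
  · intro d hd
    rw [if_neg (fun h => hd (Nat.mem_divisors.2 ⟨h, hg⟩))]

lemma sum_range_dvd {g d : ℕ} (hg : 0 < g) (hd : d ∣ g) :
    ∑ a ∈ range g, (if d ∣ a then 1 else 0 : ℝ) = (g : ℝ) / d := by
  obtain ⟨k, rfl⟩ := hd
  have hd0 : 0 < d := Nat.pos_of_mul_pos_right hg |> fun h => by
    rcases Nat.eq_zero_or_pos d with rfl | h
    · simp at hg
    · exact h
  have h1 : ((range (d * k)).filter fun a => d ∣ a).card = k := by
    have : (range (d * k)).filter (fun a => d ∣ a) = (range k).image (fun i => d * i) := by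
      ext a
      simp only [mem_filter, mem_range, mem_image]
      constructor
      · rintro ⟨h1, i, rfl⟩
        exact ⟨i, Nat.lt_of_mul_lt_mul_left h1, rfl⟩
      · rintro ⟨i, hi, rfl⟩
        exact ⟨Nat.mul_lt_mul_of_pos_left hi hd0, dvd_mul_right _ _⟩
    rw [this, card_image_of_injective _ (fun x y h => Nat.eq_of_mul_eq_mul_left hd0 h), card_range]
  have : (d : ℝ) ≠ 0 := by positivity
  rw [sum_boole, h1]
  push_cast
  field_simp

/-- Indicator of `gcd (a, b, g) = 1`. -/
noncomputable def copTriple (g a b : ℕ) : ℝ := if (Nat.gcd a b).Coprime g then 1 else 0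

open ArithmeticFunction in
lemma copTriple_eq {g : ℕ} (hg : 0 < g) (a b : ℕ) :
    copTriple g a b = ∑ d ∈ g.divisors,
      (moebius d : ℝ) * ((if d ∣ a then 1 else 0) * (if d ∣ b then 1 else 0)) := by
  have h1 := congrArg (fun f : ArithmeticFunction ℤ => f (Nat.gcd (Nat.gcd a b) g))
    moebius_mul_coe_zeta
  simp only [coe_mul_zeta_apply, one_apply] at h1
  have h2 : copTriple g a b = ∑ d ∈ (Nat.gcd (Nat.gcd a b) g).divisors, (moebius d : ℝ) := by
    have := congrArg (Int.cast : ℤ → ℝ) h1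
    push_cast at this
    exact this.symm
  have h3 : (Nat.gcd (Nat.gcd a b) g).divisors = g.divisors.filter fun d => d ∣ a ∧ d ∣ b := by
    ext d
    have := (Nat.gcd_pos_of_pos_right (Nat.gcd a b) hg).ne'
    simp only [Nat.mem_divisors, mem_filter, Nat.dvd_gcd_iff]
    have := hg.ne'
    tauto
  rw [h2, h3, sum_filter]
  refine sum_congr rfl fun d _ => ?_
  by_cases h1 : d ∣ a <;> by_cases h2 : d ∣ b <;> simp [h1, h2]

/-- The Jordan totient formula `J₂(g) = g^2 ∏ (1 - p^(-2))`. -/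
lemma sum_copTriple_range {g : ℕ} (hg : 0 < g) :
    ∑ a ∈ range g, ∑ b ∈ range g, copTriple g a b =
      (g : ℝ) ^ 2 * ∏ p ∈ g.primeFactors, (1 - ((p : ℝ) ^ 2)⁻¹) := by
  simp only [copTriple_eq hg]
  simp only [sum_comm (t := g.divisors)]
  rw [← sum_divisors_moebius hg.ne', mul_sum]
  refine sum_congr rfl fun d hd => ?_
  simp only [← mul_sum, ← sum_mul]
  rw [sum_range_dvd hg (Nat.dvd_of_mem_divisors hd)]
  ring

/-- Removing `a = 0` and `b = 0` from the pairs counted by the Jordan totient removes `φ(g)` pairs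
each; the two removals are disjoint because `g ≥ 2`. -/
lemma sum_copTriple {g : ℕ} (hg : 2 ≤ g) :
    ∑ a ∈ Ico 1 g, ∑ b ∈ Ico 1 g, copTriple g a b =
      (g : ℝ) ^ 2 * ∏ p ∈ g.primeFactors, (1 - ((p : ℝ) ^ 2)⁻¹) - 2 * (g.totient : ℝ) := by
  have hr : ∀ f : ℕ → ℝ, ∑ a ∈ range g, f a = f 0 + ∑ a ∈ Ico 1 g, f a := fun f => by
    rw [range_eq_Ico, sum_eq_sum_Ico_succ_bot (by omega)]
  have h0 : copTriple g 0 0 = 0 := by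
    unfold copTriple
    rw [if_neg]
    simp only [Nat.gcd_zero_left]
    rw [Nat.coprime_zero_left]
    omega
  have ht : ∑ b ∈ range g, copTriple g 0 b = g.totient := by
    unfold copTriple
    rw [Nat.totient_eq_card_coprime, sum_boole]
    simp [Nat.coprime_comm]
  have ht' : ∑ a ∈ range g, copTriple g a 0 = g.totient := by
    rw [← ht]
    refine sum_congr rfl fun a _ => ?_
    unfold copTriple
    rw [Nat.gcd_comm]
  have h1 := sum_copTriple_range (g := g) (by omega)
  rw [hr, ht] at h1
  simp only [hr (copTriple g _)] at h1
  rw [sum_add_distrib] at h1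
  rw [hr, h0] at ht'
  linarith

/-- Indicator that `g` is even or that the central digits `u`, `v` are not both even, so that the
prime `2` raises no obstruction beyond the one in `copTriple`. -/
noncomputable def oddPair (g u v : ℕ) : ℝ := if Even g ∨ ¬ (Even u ∧ Even v) then 1 else 0

lemma sum_oddPair_even {g : ℕ} (hg : Even g) :
    ∑ u ∈ range g, ∑ v ∈ range g, oddPair g u v = (g : ℝ) ^ 2 := by
  simp [oddPair, hg]
  ring

lemma sum_oddPair_odd {g : ℕ} (hg : ¬ Even g) :
    ∑ u ∈ range g, ∑ v ∈ range g, oddPair g u v = (3 * (g : ℝ) + 1) * ((g : ℝ) - 1) / 4 := by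
  have h1 : ∀ u v, oddPair g u v = 1 - (if Even u then 1 else 0) * (if Even v then 1 else 0) := by
    intro u v
    unfold oddPair
    by_cases hu : Even u <;> by_cases hv : Even v <;> simp [hg, hu, hv]
  obtain ⟨k, hk⟩ := Nat.not_even_iff_odd.1 hg
  have h2 : ∀ k : ℕ, ∑ u ∈ range (2 * k + 1), (if Even u then 1 else 0 : ℝ) = k + 1 := by
    intro k
    induction k with
    | zero => rw [mul_zero, zero_add, sum_range_one]; simp
    | succ k ih =>
      rw [show 2 * (k + 1) + 1 = 2 * k + 1 + 1 + 1 by ring, sum_range_succ, sum_range_succ, ih,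
        if_neg (by simp [parity_simps]), if_pos (by simp [parity_simps])]
      push_cast; ring
  simp only [h1, sum_sub_distrib, ← mul_sum, ← sum_mul]
  rw [hk, h2]
  simp
  ring

/-- The density computed from the local conditions at the digits and the Möbius sum is the constant
of the theorem: `φ(g) / g` is `∏ (1 - p^(-2))` times `∏ p / (p + 1)`, and for odd `g` the prime `2`
contributes the factor `3 / 4` to the Euler product. -/
lemma main_const {g : ℕ} (hg : 2 ≤ g) :
    (∑ a ∈ Ico 1 g, ∑ b ∈ Ico 1 g, copTriple g a b) *
      (∑ u ∈ range g, ∑ v ∈ range g, oddPair g u v) * muSum (2 * g) =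
    rho g / (Real.pi ^ 2 / 6) *
      (1 - 2 / (g : ℝ) * ∏ p ∈ g.primeFactors, (p : ℝ) / ((p : ℝ) + 1)) *
      (((g : ℝ) - 1) * g) ^ 2 := by
  have hg2 : (2 : ℝ) ≤ g := by exact_mod_cast hg
  set P : ℝ := ∏ p ∈ g.primeFactors, (1 - ((p : ℝ) ^ 2)⁻¹) with hP
  set R : ℝ := ∏ p ∈ g.primeFactors, (p : ℝ) / ((p : ℝ) + 1) with hR
  have hP0 : 0 < P := prod_pos fun p hp => one_sub_inv_sq_pos (Nat.prime_of_mem_primeFactors hp)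
  have hphi : (g.totient : ℝ) = g * (P * R) := by
    have := Nat.totient_eq_mul_prod_factors g
    have h2 := congrArg (Rat.cast : ℚ → ℝ) this
    push_cast at h2
    rw [h2, hP, hR, ← prod_mul_distrib]
    congr 1
    refine prod_congr rfl fun p hp => ?_
    have : (0 : ℝ) < p := by exact_mod_cast (Nat.prime_of_mem_primeFactors hp).pos
    field_simp
    ring
  have hF := muSum_eq (Q := 2 * g) (by omega)
  have hpi : 0 < Real.pi ^ 2 / 6 := by positivity
  set Y := Real.pi ^ 2 / 6
  rw [sum_copTriple hg, ← hP, hphi]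
  by_cases he : Even g
  · rw [sum_oddPair_even he, rho, if_pos he]
    have hpf : (2 * g).primeFactors = g.primeFactors := by
      rw [Nat.primeFactors_mul (by norm_num) (by omega), Nat.Prime.primeFactors Nat.prime_two,
        union_eq_right, singleton_subset_iff]
      exact Nat.mem_primeFactors.2 ⟨Nat.prime_two, he.two_dvd, by omega⟩
    rw [hpf, ← hP] at hF
    have hF2 : muSum (2 * g) = P⁻¹ / Y := by rw [← hF]; field_simp
    rw [hF2]
    have : (g : ℝ) - 1 ≠ 0 := by linarith
    field_simp
  · rw [sum_oddPair_odd he, rho, if_neg he]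
    have hpf : (2 * g).primeFactors = insert 2 g.primeFactors := by
      rw [Nat.primeFactors_mul (by norm_num) (by omega), Nat.Prime.primeFactors Nat.prime_two]
      rfl
    have h2 : 2 ∉ g.primeFactors := fun h => he (even_iff_two_dvd.2 (Nat.dvd_of_mem_primeFactors h))
    rw [hpf, prod_insert h2, ← hP] at hF
    have hF2 : muSum (2 * g) = (3 / 4 * P)⁻¹ / Y := by
      have : (1 - (((2 : ℕ) : ℝ) ^ 2)⁻¹) = 3 / 4 := by norm_num
      rw [this] at hF
      rw [← hF]; field_simp
    rw [hF2]
    have : (g : ℝ) - 1 ≠ 0 := by linarith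
    field_simp

/-! ### Local conditions and summation over the outer and central digits -/

/-- The part of a palindrome of length `2 * K + 3` due to its outer digit `a` and its central
digit `u`. -/
def palBase (g K a u : ℕ) : ℕ := a * (1 + g ^ (2 * (K + 1))) + u * g ^ (K + 1)

lemma palBase_pos {g K a u : ℕ} (ha : a ∈ Ico 1 g) : 0 < palBase g K a u := by
  rw [mem_Ico] at ha
  unfold palBase
  have : 0 < a * (1 + g ^ (2 * (K + 1))) := by
    apply Nat.mul_pos <;> omega
  omega

lemma palBase_add_le {g K a u : ℕ} (hg : 2 ≤ g) (ha : a ∈ Ico 1 g) (hu : u ∈ range g)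
    (c : Fin K → Fin g) : palBase g K a u + dval (wt g K) c ≤ g ^ (2 * K + 3) := by
  have h0 : ∑ m ∈ Palins g (2 * (K + 1) + 1), (if m ≤ g ^ (2 * K + 3) then 0 else 1) = 0 := by
    refine sum_eq_zero fun m hm => ?_
    rw [Palins, mem_filter, mem_Ico] at hm
    exact if_pos hm.1.2.le
  rw [sum_palins hg, sum_eq_zero_iff] at h0
  have h1 := h0 a ha
  rw [sum_eq_zero_iff] at h1
  have h2 := h1 u hu
  rw [sum_eq_zero_iff] at h2
  have h3 := h2 c (mem_univ c)
  by_contra hc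
  rw [palBase] at hc
  rw [if_neg hc] at h3
  exact one_ne_zero h3

lemma dvd_dval {g K : ℕ} (c : Fin K → Fin g) : g ∣ dval (wt g K) c := by
  refine dvd_sum fun i _ => Dvd.dvd.mul_left ?_ _
  have := i.2
  exact dvd_add (dvd_pow_self g (by omega)) (dvd_pow_self g (by omega))

/-- Only the last digit `a` matters for common factors with `g`. -/
lemma gcd_palindrome {g K : ℕ} (a u : ℕ) (c : Fin K → Fin g) :
    Nat.gcd (palBase g K a u + dval (wt g K) c) g = Nat.gcd a g := by
  have h : palBase g K a u + dval (wt g K) c ≡ a [MOD g] := by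
    obtain ⟨x, hx⟩ := dvd_dval c
    refine Nat.ModEq.symm ((Nat.modEq_iff_dvd' ?_).2 ?_)
    · unfold palBase; nlinarith [Nat.zero_le (a * g ^ (2 * (K + 1))), Nat.zero_le (u * g ^ (K + 1)),
        Nat.zero_le (dval (wt g K) c)]
    · refine ⟨a * g ^ (2 * K + 1) + u * g ^ K + x, ?_⟩
      rw [hx, palBase]
      have : a * (1 + g ^ (2 * (K + 1))) + u * g ^ (K + 1) + g * x =
        g * (a * g ^ (2 * K + 1) + u * g ^ K + x) + a := by ring
      omega
  exact h.gcd_eq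

lemma gcd_palindromes {g K : ℕ} (a b u v : ℕ) (c c' : Fin K → Fin g) :
    Nat.gcd (Nat.gcd (palBase g K a u + dval (wt g K) c) (palBase g K b v + dval (wt g K) c')) g =
      Nat.gcd (Nat.gcd a b) g := by
  have key : ∀ x y : ℕ, Nat.gcd (Nat.gcd x y) g = Nat.gcd (Nat.gcd x g) (Nat.gcd y g) := by
    intro x y
    apply Nat.dvd_antisymm
    · simp only [Nat.dvd_gcd_iff]
      have h1 := Nat.gcd_dvd_left (Nat.gcd x y) g
      have h2 := Nat.gcd_dvd_right (Nat.gcd x y) g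
      exact ⟨⟨h1.trans (Nat.gcd_dvd_left x y), h2⟩, h1.trans (Nat.gcd_dvd_right x y), h2⟩
    · simp only [Nat.dvd_gcd_iff]
      have h1 := Nat.gcd_dvd_left (Nat.gcd x g) (Nat.gcd y g)
      have h2 := Nat.gcd_dvd_right (Nat.gcd x g) (Nat.gcd y g)
      exact ⟨⟨h1.trans (Nat.gcd_dvd_left x g), h2.trans (Nat.gcd_dvd_left y g)⟩,
        h1.trans (Nat.gcd_dvd_right x g)⟩
  rw [key, gcd_palindrome, gcd_palindrome, ← key]

/-- For odd `g` every non-central digit is counted twice, so the central digit decides the parity. -/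
lemma even_palindrome {g K : ℕ} (hg : ¬ Even g) (a u : ℕ) (c : Fin K → Fin g) :
    Even (palBase g K a u + dval (wt g K) c) ↔ Even u := by
  have h1 : Even (dval (wt g K) c) := by
    rw [even_iff_two_dvd]
    refine dvd_sum fun i _ => Dvd.dvd.mul_left ?_ _
    rw [← even_iff_two_dvd, wt]
    simp [Nat.even_add, Nat.even_pow, hg]
  have h2 : ∀ n, ¬ Even (g ^ n) := fun n h => hg (Nat.even_pow.1 h).1
  rw [Nat.even_add, palBase, Nat.even_add, Nat.even_mul, Nat.even_mul, Nat.even_add]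
  simp [h1, h2]

lemma pairCount_bad {g K a b u v : ℕ}
    (h : copTriple g a b * oddPair g u v = 0) :
    pairCount g K (palBase g K a u) (palBase g K b v) = 0 := by
  refine sum_eq_zero fun c _ => sum_eq_zero fun c' _ => if_neg fun h1 => ?_
  rcases mul_eq_zero.1 h with h | h
  · unfold copTriple at h
    rw [ite_eq_right_iff] at h
    refine one_ne_zero (h ?_)
    rw [Nat.Coprime, ← gcd_palindromes (K := K) a b u v c c', h1, Nat.gcd_one_left]
  · unfold oddPair at h
    rw [ite_eq_right_iff] at h
    by_cases hg : Even g
    · exact one_ne_zero (h (Or.inl hg))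
    · refine one_ne_zero (h (Or.inr fun huv => ?_))
      have e1 := (even_palindrome hg a u c).2 huv.1
      have e2 := (even_palindrome hg b v c').2 huv.2
      have := Nat.dvd_gcd e1.two_dvd e2.two_dvd
      rw [h1] at this
      omega

lemma coprime_of_good {g K a b u v : ℕ} (h : copTriple g a b * oddPair g u v ≠ 0)
    (c c' : Fin K → Fin g) :
    (Nat.gcd (palBase g K a u + dval (wt g K) c)
      (palBase g K b v + dval (wt g K) c')).Coprime (2 * g) := by
  obtain ⟨h1, h2⟩ := mul_ne_zero_iff.1 h
  have hg : (Nat.gcd a b).Coprime g := by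
    by_contra hc
    exact h1 (if_neg hc)
  have h2 : Even g ∨ ¬ (Even u ∧ Even v) := by
    by_contra hc
    exact h2 (if_neg hc)
  have h3 : (Nat.gcd (palBase g K a u + dval (wt g K) c)
      (palBase g K b v + dval (wt g K) c')).Coprime g := by
    rw [Nat.Coprime, gcd_palindromes]; exact hg
  refine Nat.Coprime.mul_right ?_ h3
  by_cases hev : Even g
  · exact Nat.Coprime.of_dvd_right hev.two_dvd h3
  · rw [Nat.coprime_two_right, ← Nat.not_even_iff_odd]
    intro he
    refine (h2.resolve_left hev) ⟨?_, ?_⟩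
    · exact (even_palindrome hev a u c).1
        (even_iff_two_dvd.2 (he.two_dvd.trans (Nat.gcd_dvd_left _ _)))
    · exact (even_palindrome hev b v c').1
        (even_iff_two_dvd.2 (he.two_dvd.trans (Nat.gcd_dvd_right _ _)))

/-- The number of coprime pairs of palindromes of length `2 * (K + 1) + 1`. -/
noncomputable def copCount (g K : ℕ) : ℝ :=
  (((Palins g (2 * (K + 1) + 1)) ×ˢ (Palins g (2 * (K + 1) + 1))).filter
            (fun p => Nat.gcd p.1 p.2 = 1)).card

lemma copCount_eq {g : ℕ} (hg : 2 ≤ g) (K : ℕ) :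
    copCount g K = ∑ a ∈ Ico 1 g, ∑ b ∈ Ico 1 g, ∑ u ∈ range g, ∑ v ∈ range g,
      pairCount g K (palBase g K a u) (palBase g K b v) := by
  unfold copCount
  rw [card_filter, sum_product, Nat.cast_sum, sum_palins hg]
  refine sum_congr rfl fun a _ => ?_
  rw [sum_comm (s := Ico 1 g)]
  refine sum_congr rfl fun u _ => ?_
  simp only [Nat.cast_sum, sum_palins hg]
  simp only [pairCount]
  rw [sum_comm]
  refine sum_congr rfl fun b _ => ?_
  rw [sum_comm]
  refine sum_congr rfl fun v _ => ?_
  refine sum_congr rfl fun c _ => sum_congr rfl fun c' _ => ?_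
  rw [Nat.cast_ite, Nat.cast_one, Nat.cast_zero]
  rfl

lemma exists_total_bound {g : ℕ} (hg : 2 ≤ g) : ∃ (C : ℝ) (T : ℕ), 0 < C ∧ 0 < T ∧
    ∀ K l : ℕ, 4 * T * (l + 1) ^ 2 ≤ K →
    |copCount g K - rho g / (Real.pi ^ 2 / 6) *
      (1 - 2 / (g : ℝ) * ∏ p ∈ g.primeFactors, (p : ℝ) / ((p : ℝ) + 1)) *
        ((Palins g (2 * (K + 1) + 1)).card : ℝ) ^ 2| ≤
      C * ((Palins g (2 * (K + 1) + 1)).card : ℝ) ^ 2 * ((Real.sqrt g)⁻¹) ^ l := by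
  obtain ⟨C, T, hC, hT, hpair⟩ := exists_pair_bound hg
  have hg2 : (2 : ℝ) ≤ g := by exact_mod_cast hg
  refine ⟨C, T, hC, hT, fun K l hK => ?_⟩
  set G : ℝ := (g : ℝ) ^ K with hG
  have hcard : ((Palins g (2 * (K + 1) + 1)).card : ℝ) = ((g : ℝ) - 1) * g * G := by
    rw [card_palins hg, Nat.cast_mul, Nat.cast_sub (by omega)]
    push_cast
    ring
  have hmain := main_const hg
  rw [hcard, mul_pow (((g : ℝ) - 1) * g), ← mul_assoc, ← hmain, copCount_eq hg]
  have e : (∑ a ∈ Ico 1 g, ∑ b ∈ Ico 1 g, copTriple g a b) *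
      (∑ u ∈ range g, ∑ v ∈ range g, oddPair g u v) * muSum (2 * g) * G ^ 2 =
      ∑ a ∈ Ico 1 g, ∑ b ∈ Ico 1 g, ∑ u ∈ range g, ∑ v ∈ range g,
        copTriple g a b * oddPair g u v * (G ^ 2 * muSum (2 * g)) := by
    simp only [← mul_sum, ← sum_mul]
    ring
  rw [e]
  simp only [← sum_sub_distrib]
  have hterm : ∀ a ∈ Ico 1 g, ∀ b ∈ Ico 1 g, ∀ u ∈ range g, ∀ v ∈ range g,
      |pairCount g K (palBase g K a u) (palBase g K b v) -
        copTriple g a b * oddPair g u v * (G ^ 2 * muSum (2 * g))| ≤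
      C * G ^ 2 * ((Real.sqrt g)⁻¹) ^ l := by
    intro a ha b hb u hu v hv
    by_cases h : copTriple g a b * oddPair g u v = 0
    · rw [pairCount_bad h, h, zero_mul, sub_zero, abs_zero]
      positivity
    · have h1 : copTriple g a b * oddPair g u v = 1 := by
        obtain ⟨h1, h2⟩ := mul_ne_zero_iff.1 h
        have e1 : copTriple g a b = 1 := if_pos (by by_contra hc; exact h1 (if_neg hc))
        have e2 : oddPair g u v = 1 := if_pos (by by_contra hc; exact h2 (if_neg hc))
        rw [e1, e2, one_mul]
      rw [h1, one_mul]
      exact hpair K l _ _ (palBase_pos ha) (palBase_pos hb) (palBase_add_le hg ha hu)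
        (palBase_add_le hg hb hv) (coprime_of_good h) hK
  set E := C * G ^ 2 * ((Real.sqrt g)⁻¹) ^ l with hE
  have hsum : ∀ (s : Finset ℕ) (f : ℕ → ℝ) (B : ℝ), (∀ x ∈ s, |f x| ≤ B) →
      |∑ x ∈ s, f x| ≤ s.card * B := by
    intro s f B h
    refine (abs_sum_le_sum_abs _ _).trans ((sum_le_sum h).trans ?_)
    rw [sum_const, nsmul_eq_mul]
  have h1 := hsum (Ico 1 g) _ _ fun a ha => hsum (Ico 1 g) _ _ fun b hb =>
    hsum (range g) _ _ fun u hu => hsum (range g) _ _ fun v hv => hterm a ha b hb u hu v hv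
  refine h1.trans (le_of_eq ?_)
  rw [Nat.card_Ico, card_range, Nat.cast_sub (by omega), hE]
  push_cast
  ring

/-! ### Choice of the block length -/

/-- With `l + 1 = ⌊√(K / 4T)⌋`, the saving `g^(-l/2)` is `O(g^(-c√N))`. -/
lemma exists_block_length {g T K : ℕ} (hg : 2 ≤ g) (hT : 0 < T) (hK : 4 * T ≤ K) :
    ∃ l : ℕ, 4 * T * (l + 1) ^ 2 ≤ K ∧ ((Real.sqrt g)⁻¹) ^ l ≤
      g * (g : ℝ) ^ (-(1 / (2 * Real.sqrt (8 * T)) * Real.sqrt ((K + 1 : ℕ) : ℝ))) := by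
  have hg2 : (2 : ℝ) ≤ g := by exact_mod_cast hg
  have hTr : (0 : ℝ) < T := by exact_mod_cast hT
  set s := Nat.sqrt (K / (4 * T)) with hs
  have hs1 : 1 ≤ s := by
    rw [hs, Nat.le_sqrt]
    exact (Nat.one_le_div_iff (by omega)).2 hK
  obtain ⟨l, hl⟩ : ∃ l, s = l + 1 := ⟨s - 1, by omega⟩
  refine ⟨l, ?_, ?_⟩
  · rw [← hl]
    calc 4 * T * s ^ 2 ≤ 4 * T * (K / (4 * T)) := Nat.mul_le_mul_left _ (Nat.sqrt_le' _)
      _ ≤ K := Nat.mul_div_le _ _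
  · have h1 : K < 4 * T * (l + 2) ^ 2 := by
      have h2 : K / (4 * T) < (l + 2) ^ 2 := by
        have := Nat.lt_succ_sqrt' (K / (4 * T))
        rw [← hs, hl] at this
        exact this
      rw [mul_comm]
      exact (Nat.div_lt_iff_lt_mul (by omega)).1 h2
    have h2 : ((K + 1 : ℕ) : ℝ) ≤ (Real.sqrt (8 * T) * (l + 2)) ^ 2 := by
      rw [mul_pow, Real.sq_sqrt (by positivity)]
      have : K + 1 ≤ 8 * T * (l + 2) ^ 2 := by nlinarith
      exact_mod_cast this
    have h3 : Real.sqrt ((K + 1 : ℕ) : ℝ) ≤ Real.sqrt (8 * T) * (l + 2) :=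
      Real.sqrt_le_iff.2 ⟨by positivity, h2⟩
    have hr : 0 < Real.sqrt (8 * T) := Real.sqrt_pos.2 (by positivity)
    have h4 : 1 / (2 * Real.sqrt (8 * T)) * Real.sqrt ((K + 1 : ℕ) : ℝ) ≤ (l + 2) / 2 := by
      calc _ ≤ 1 / (2 * Real.sqrt (8 * T)) * (Real.sqrt (8 * T) * (l + 2)) := by gcongr
        _ = _ := by field_simp
    have h5 : ((Real.sqrt g)⁻¹) ^ l = (g : ℝ) ^ (-((l : ℝ) / 2)) := by
      rw [Real.sqrt_eq_rpow, ← Real.rpow_neg (by positivity), ← Real.rpow_natCast,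
        ← Real.rpow_mul (by positivity)]
      congr 1
      ring
    rw [h5]
    nth_rewrite 2 [← Real.rpow_one (g : ℝ)]
    rw [← Real.rpow_add (by positivity)]
    exact Real.rpow_le_rpow_of_exponent_le (by linarith) (by linarith)

theorem relatively_prime_palindromes (g : ℕ) (hg : 2 ≤ g) :
    ∃ c C : ℝ, 0 < c ∧ 0 < C ∧ ∀ N : ℕ, 1 ≤ N →
      |((((Palins g (2 * N + 1)) ×ˢ (Palins g (2 * N + 1))).filter
            (fun p => Nat.gcd p.1 p.2 = 1)).card : ℝ) -
          rho g / (Real.pi ^ 2 / 6) *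
            (1 - 2 / (g : ℝ) * ∏ p ∈ g.primeFactors, (p : ℝ) / ((p : ℝ) + 1)) *
            ((Palins g (2 * N + 1)).card : ℝ) ^ 2| ≤
        C * ((Palins g (2 * N + 1)).card : ℝ) ^ 2 * (g : ℝ) ^ (-(c * Real.sqrt N)) := by
  obtain ⟨C, T, hC, hT, hbound⟩ := exists_total_bound hg
  have hg2 : (2 : ℝ) ≤ g := by exact_mod_cast hg
  have hTr : (0 : ℝ) < T := by exact_mod_cast hT
  set κ : ℝ := rho g / (Real.pi ^ 2 / 6) *
    (1 - 2 / (g : ℝ) * ∏ p ∈ g.primeFactors, (p : ℝ) / ((p : ℝ) + 1)) with hκ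
  have hr : 0 < Real.sqrt (8 * T) := Real.sqrt_pos.2 (by positivity)
  refine ⟨1 / (2 * Real.sqrt (8 * T)), C * g + g * (1 + |κ|), by positivity, by positivity, ?_⟩
  intro N hN
  obtain ⟨K, rfl⟩ : ∃ K, N = K + 1 := ⟨N - 1, by omega⟩
  change |copCount g K - _| ≤ _
  set P : ℝ := ((Palins g (2 * (K + 1) + 1)).card : ℝ) with hP
  set E : ℝ := (g : ℝ) ^ (-(1 / (2 * Real.sqrt (8 * T)) * Real.sqrt ((K + 1 : ℕ) : ℝ))) with hE
  have hE0 : 0 < E := by positivity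
  rcases le_or_gt (4 * T) K with hK | hK
  · obtain ⟨l, hl, hlE⟩ := exists_block_length hg hT hK
    refine (hbound K l hl).trans ?_
    calc C * P ^ 2 * ((Real.sqrt g)⁻¹) ^ l ≤ C * P ^ 2 * (g * E) := by gcongr
      _ = C * g * P ^ 2 * E := by ring
      _ ≤ _ := by
          gcongr
          have : 0 ≤ (g : ℝ) * (1 + |κ|) := by positivity
          linarith
  -- finitely many lengths remain; the trivial bound suffices
  · have hgE : 1 ≤ g * E := by
      have h1 : Real.sqrt ((K + 1 : ℕ) : ℝ) ≤ Real.sqrt (8 * T) := by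
        apply Real.sqrt_le_sqrt
        have : K + 1 ≤ 8 * T := by omega
        exact_mod_cast this
      have h2 : 1 / (2 * Real.sqrt (8 * T)) * Real.sqrt ((K + 1 : ℕ) : ℝ) ≤ 1 := by
        calc _ ≤ 1 / (2 * Real.sqrt (8 * T)) * Real.sqrt (8 * T) := by gcongr
          _ = 1 / 2 := by field_simp
          _ ≤ 1 := by norm_num
      rw [hE]
      nth_rewrite 1 [← Real.rpow_one (g : ℝ)]
      rw [← Real.rpow_add (by positivity)]
      exact Real.one_le_rpow (by linarith) (by linarith)
    have h1 : copCount g K ≤ P ^ 2 := by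
      have := card_filter_le (Palins g (2 * (K + 1) + 1) ×ˢ Palins g (2 * (K + 1) + 1))
        (fun p => Nat.gcd p.1 p.2 = 1)
      rw [card_product] at this
      rw [copCount, hP, sq]
      exact_mod_cast this
    have h0 : 0 ≤ copCount g K := by unfold copCount; positivity
    calc |copCount g K - κ * P ^ 2| ≤ |copCount g K| + |κ * P ^ 2| := abs_sub _ _
      _ ≤ P ^ 2 + |κ| * P ^ 2 := by
          rw [abs_of_nonneg h0, abs_mul, abs_of_nonneg (by positivity : 0 ≤ P ^ 2)]
          linarith
      _ = (1 + |κ|) * P ^ 2 * 1 := by ring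
      _ ≤ (1 + |κ|) * P ^ 2 * (g * E) := by gcongr
      _ = g * (1 + |κ|) * P ^ 2 * E := by ring
      _ ≤ _ := by
          gcongr
          have : 0 ≤ C * (g : ℝ) := by positivity
          linarith
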